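/- arXiv:1804.09191 — 8 statements merged into one kernel-verified Lean document; each statement's English description precedes it below -/
import Mathlib

section
/- Suppose u, v ∈ B = ℂ[x,y] generate B as a ℂ-algebra. Let n ≥ 1 be an integer, set F = 4(uv − 1), and let P = (v − u·F^{n+1})⁴ − 16·F^{2n+3}. If all coefficients of P are real (so P ∈ A = ℝ[x,y]), then some unit of the quotient ring A/PA is not the residue class of a real constant (i.e., (A/PA)* ≠ ℝ*). -/
open MvPolynomial

/-!
Write `F̄`, `P̄ = P` for the coefficientwise complex conjugates. The class of the real polynomial
`F F̄` is a unit of `A/PA` that is not a real constant.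

* Unit: modulo `F` one has `uv = 1` and `P = v⁴`, hence `u⁴ P = 1`, so `F` and `P` are coprime in
  `B`. Multiplying an inverse of `F` modulo `P` by its conjugate gives an inverse of `F F̄` modulo
  `P` that is real (`exists_map_eq_of_conj_eq` descends it to `A`).
* Not constant: neither `u` nor `v` is a constant, because `B` has Krull dimension two and so is
  not generated by one element (`not_const_of_adjoin_eq_top`). Hence `deg F = deg u + deg v > 0`,
  and `deg P = 4 (deg u + (n + 1) deg F) > 2 deg F = deg (F F̄)`. So `F F̄ - r` is nonzero and of
  degree smaller than that of `P`, for every real `r`, and `P` does not divide it.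
-/

/-- If `u` were constant, `v` alone would generate `ℂ[x,y]`, making a ring of Krull dimension two a
quotient of the one-dimensional ring `ℂ[T]`. -/
lemma not_const_of_adjoin_eq_top {u v : MvPolynomial (Fin 2) ℂ}
    (huv : Algebra.adjoin ℂ {u, v} = ⊤) : u.totalDegree ≠ 0 := by
  intro h
  rw [totalDegree_eq_zero_iff_eq_C] at h
  rw [h, ← MvPolynomial.algebraMap_eq, Algebra.adjoin_insert_algebraMap,
    Algebra.adjoin_singleton_eq_range_aeval, AlgHom.range_eq_top] at huv
  have := ringKrullDim_le_of_surjective (Polynomial.aeval (R := ℂ) v).toRingHom huv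
  rw [MvPolynomial.ringKrullDim_of_isNoetherianRing, Polynomial.ringKrullDim_of_isNoetherianRing,
    ringKrullDim_eq_zero_of_field] at this
  simp only [zero_add, Nat.card_eq_fintype_card, Fintype.card_fin] at this
  norm_cast at this

lemma totalDegree_pow_of_ne_zero {f : MvPolynomial (Fin 2) ℂ} (hf : f ≠ 0) (n : ℕ) :
    (f ^ n).totalDegree = n * f.totalDegree := by
  induction n with
  | zero => simp
  | succ k ih =>
    rw [pow_succ, totalDegree_mul_of_isDomain (pow_ne_zero _ hf) hf, ih]
    ring

/-- Coefficientwise complex conjugation. -/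
noncomputable abbrev conjMv : MvPolynomial (Fin 2) ℂ →+* MvPolynomial (Fin 2) ℂ :=
  MvPolynomial.map (starRingEnd ℂ)

lemma conjMv_conjMv (f : MvPolynomial (Fin 2) ℂ) : conjMv (conjMv f) = f := by
  ext m
  simp [conjMv, coeff_map]

lemma totalDegree_conjMv (f : MvPolynomial (Fin 2) ℂ) :
    (conjMv f).totalDegree = f.totalDegree := by
  unfold totalDegree
  rw [support_map_of_injective _ (starRingEnd ℂ).injective]

lemma conjMv_map (f : MvPolynomial (Fin 2) ℝ) :
    conjMv (MvPolynomial.map (algebraMap ℝ ℂ) f) = MvPolynomial.map (algebraMap ℝ ℂ) f := by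
  ext m
  simp [conjMv, coeff_map]

lemma exists_map_eq_of_conj_eq {f : MvPolynomial (Fin 2) ℂ} (h : conjMv f = f) :
    ∃ g : MvPolynomial (Fin 2) ℝ, MvPolynomial.map (algebraMap ℝ ℂ) g = f := by
  have : f ∈ Set.range (MvPolynomial.map (σ := Fin 2) (algebraMap ℝ ℂ)) := by
    rw [mem_range_map_iff_coeffs_subset]
    intro c hc
    rw [Finset.mem_coe, mem_coeffs_iff] at hc
    obtain ⟨m, -, rfl⟩ := hc
    have hm := congrArg (coeff m) h
    rw [coeff_map] at hm
    obtain ⟨r, hr⟩ := Complex.conj_eq_iff_real.1 hm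
    exact ⟨r, hr.symm⟩
  exact this

theorem stmt_8 (u v : MvPolynomial (Fin 2) ℂ)
    (huv : Algebra.adjoin ℂ {u, v} = ⊤)
    (n : ℕ) (hn : 1 ≤ n)
    (F : MvPolynomial (Fin 2) ℂ) (hF : F = 4 * (u * v - 1))
    (P : MvPolynomial (Fin 2) ℂ)
    (hP : P = (v - u * F ^ (n + 1)) ^ 4 - 16 * F ^ (2 * n + 3))
    (P₀ : MvPolynomial (Fin 2) ℝ)
    (hP₀ : MvPolynomial.map (algebraMap ℝ ℂ) P₀ = P) :
    ∃ w : (MvPolynomial (Fin 2) ℝ ⧸ Ideal.span {P₀})ˣ,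
      ∀ r : ℝ, (w : MvPolynomial (Fin 2) ℝ ⧸ Ideal.span {P₀}) ≠
        algebraMap ℝ (MvPolynomial (Fin 2) ℝ ⧸ Ideal.span {P₀}) r := by
  have hu := not_const_of_adjoin_eq_top huv
  have hv := not_const_of_adjoin_eq_top (Set.pair_comm u v ▸ huv)
  have ne0 : ∀ {f : MvPolynomial (Fin 2) ℂ}, f.totalDegree ≠ 0 → f ≠ 0 := by
    rintro f hf rfl
    simp at hf
  have hdF : F.totalDegree = u.totalDegree + v.totalDegree := by
    have h4 : (4 : MvPolynomial (Fin 2) ℂ) = C 4 := (map_ofNat C 4).symm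
    have huv' := totalDegree_mul_of_isDomain (ne0 hu) (ne0 hv)
    have h1 : (u * v - 1).totalDegree = u.totalDegree + v.totalDegree := by
      rw [sub_eq_add_neg, totalDegree_add_eq_left_of_totalDegree_lt, huv']
      rw [totalDegree_neg, totalDegree_one, huv']
      lia
    rw [hF, totalDegree_mul_of_isDomain (by simp) (ne0 (by rw [h1]; lia)), h1, h4, totalDegree_C,
      zero_add]
  have hF0 : F ≠ 0 := ne0 (by lia)
  have hdP : P.totalDegree = 4 * (u.totalDegree + (n + 1) * F.totalDegree) := by
    have h16 : (16 : MvPolynomial (Fin 2) ℂ) = C 16 := (map_ofNat C 16).symm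
    have ha : (u * F ^ (n + 1)).totalDegree = u.totalDegree + (n + 1) * F.totalDegree := by
      rw [totalDegree_mul_of_isDomain (ne0 hu) (pow_ne_zero _ hF0), totalDegree_pow_of_ne_zero hF0]
    have hb : (v - u * F ^ (n + 1)).totalDegree = u.totalDegree + (n + 1) * F.totalDegree := by
      rw [sub_eq_add_neg, totalDegree_add_eq_right_of_totalDegree_lt, totalDegree_neg, ha]
      rw [totalDegree_neg, ha]
      nlinarith [Nat.pos_of_ne_zero hu]
    have hc : (16 * F ^ (2 * n + 3)).totalDegree = (2 * n + 3) * F.totalDegree := by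
      rw [totalDegree_mul_of_isDomain (by simp) (pow_ne_zero _ hF0),
        totalDegree_pow_of_ne_zero hF0, h16, totalDegree_C, zero_add]
    have hd : ((v - u * F ^ (n + 1)) ^ 4).totalDegree
        = 4 * (u.totalDegree + (n + 1) * F.totalDegree) := by
      rw [totalDegree_pow_of_ne_zero (ne0 (by rw [hb]; lia)), hb]
    rw [hP, sub_eq_add_neg, totalDegree_add_eq_left_of_totalDegree_lt, hd]
    rw [totalDegree_neg, hc, hd]
    nlinarith [Nat.pos_of_ne_zero hu]
  have hlt : 2 * F.totalDegree < P.totalDegree := by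
    rw [hdP]
    nlinarith [Nat.pos_of_ne_zero hu]
  have hP0 : P ≠ 0 := ne0 (by lia)
  have hconjP : conjMv P = P := by rw [← hP₀, conjMv_map]
  obtain ⟨N, hN⟩ : ∃ N, MvPolynomial.map (algebraMap ℝ ℂ) N = F * conjMv F :=
    exists_map_eq_of_conj_eq (by rw [map_mul, conjMv_conjMv, mul_comm])
  -- An inverse of `F` modulo `P`: both `uv - 1` and `P - v⁴` are multiples of `F`.
  obtain ⟨a, b, hab⟩ : ∃ a b, a * F = 1 + b * P := by
    have hd : F ∣ 1 - u ^ 4 * P := by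
      have h1 : F ∣ 1 - u ^ 4 * v ^ 4 := by
        have h4 : (C (1 / 4) : MvPolynomial (Fin 2) ℂ) * 4 = 1 := by
          have h4' : (4 : MvPolynomial (Fin 2) ℂ) = C 4 := (map_ofNat C 4).symm
          rw [h4', ← C_mul]
          norm_num
        refine ⟨-C (1 / 4) * (1 + u * v + u ^ 2 * v ^ 2 + u ^ 3 * v ^ 3), ?_⟩
        rw [hF]
        linear_combination (-(1 - u ^ 4 * v ^ 4)) * h4
      have h2 : F ∣ P - v ^ 4 := by
        have h3 : F ∣ (v - u * F ^ (n + 1)) ^ 4 - v ^ 4 := by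
          refine dvd_trans ?_ (sub_dvd_pow_sub_pow _ _ 4)
          exact ⟨-u * F ^ n, by ring⟩
        have h4 : F ∣ 16 * F ^ (2 * n + 3) := ⟨16 * F ^ (2 * n + 2), by ring⟩
        rw [hP, sub_right_comm]
        exact dvd_sub h3 h4
      have h5 := dvd_sub h1 (h2.mul_left (u ^ 4))
      convert h5 using 1
      ring
    obtain ⟨a, ha⟩ := hd
    exact ⟨a, -u ^ 4, by linear_combination -ha⟩
  have hab' : conjMv a * conjMv F = 1 + conjMv b * P := by
    rw [← map_mul, hab, map_add, map_mul, map_one, hconjP]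
  obtain ⟨M, hM⟩ : ∃ M, MvPolynomial.map (algebraMap ℝ ℂ) M = a * conjMv a :=
    exists_map_eq_of_conj_eq (by rw [map_mul, conjMv_conjMv, mul_comm])
  -- The cofactor of `P` in `M * N - 1`, where `M * N = (1 + b P) (1 + b̄ P)`, is invariant under
  -- conjugation.
  obtain ⟨H, hH⟩ : ∃ H, MvPolynomial.map (algebraMap ℝ ℂ) H
      = b + conjMv b + b * conjMv b * P := by
    apply exists_map_eq_of_conj_eq
    simp only [map_add, map_mul, conjMv_conjMv, hconjP]
    ring
  have hMN : M * N = 1 + H * P₀ := by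
    apply map_injective (algebraMap ℝ ℂ) (algebraMap ℝ ℂ).injective
    simp only [map_add, map_mul, map_one, hM, hN, hH, hP₀]
    linear_combination (conjMv a * conjMv F) * hab + (1 + b * P) * hab'
  have hq : Ideal.Quotient.mk (Ideal.span {P₀}) (M * N) = 1 := by
    rw [← map_one (Ideal.Quotient.mk (Ideal.span {P₀})), Ideal.Quotient.eq,
      Ideal.mem_span_singleton]
    exact ⟨H, by rw [hMN]; ring⟩
  rw [map_mul] at hq
  refine ⟨⟨Ideal.Quotient.mk _ N, Ideal.Quotient.mk _ M, by rw [mul_comm, hq], hq⟩, fun r hr ↦ ?_⟩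
  have hr' : Ideal.Quotient.mk (Ideal.span {P₀}) N = Ideal.Quotient.mk (Ideal.span {P₀}) (C r) := hr
  rw [Ideal.Quotient.eq, Ideal.mem_span_singleton] at hr'
  obtain ⟨K, hK⟩ := hr'
  have hK' := congrArg (MvPolynomial.map (algebraMap ℝ ℂ)) hK
  rw [map_sub, map_mul, hN, hP₀, map_C] at hK'
  have hFF : (F * conjMv F).totalDegree = 2 * F.totalDegree := by
    have hc : conjMv F ≠ 0 := ne0 (by rw [totalDegree_conjMv]; lia)
    rw [totalDegree_mul_of_isDomain hF0 hc, totalDegree_conjMv, two_mul]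
  have hdeg : (F * conjMv F - C (algebraMap ℝ ℂ r)).totalDegree = 2 * F.totalDegree := by
    rw [sub_eq_add_neg, totalDegree_add_eq_left_of_totalDegree_lt, hFF]
    rw [totalDegree_neg, totalDegree_C, hFF]
    lia
  have hK0 : MvPolynomial.map (algebraMap ℝ ℂ) K ≠ 0 := by
    intro h0
    rw [hK', h0, mul_zero, totalDegree_zero] at hdeg
    lia
  rw [hK', totalDegree_mul_of_isDomain hP0 hK0] at hdeg
  lia
end

section
/- Suppose u, v ∈ B = ℂ[x,y] generate B as a ℂ-algebra. Set F = −3(uv − 1), G = u·F + 4/9, H = 4v − 3F², and let P = 4v − 3F² − 27·((u − G²)·H + F·G − 1)³. If all coefficients of P are real (so P ∈ A = ℝ[x,y]), then some unit of the quotient ring A/PA is not the residue class of a real constant (i.e., (A/PA)* ≠ ℝ*). -/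
open MvPolynomial

/-! With `K = (u - G²)H + FG - 1` one has `P = H - 27K³`, and `K` is a unit modulo `P`, with
inverse `L = 3 - 54uK² + 81K²G²`. Hence the norm `K·K̄` (the bar conjugates coefficients) descends
to a unit of `A/PA`. Suppose it is a real constant `r`. Write `Z` for the curve `P = 0` in `ℂ²`.
Complex conjugation is a bijection of `Z` and it maps the fibre `K = κ` onto the fibre
`K = r/κ̄`. The number of points of these fibres forbids this.

As `u, v` are coordinates on `ℂ²`, the fibres can be computed in the `(u, v)`-plane. The curve `Z`
has two components: one is parametrized by `τ ≠ 0`, with `K = 3/τ²` and `G = τ²(τ + 1)/27`; the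
other one by `m ≠ -1`, with `K = 1/(3m² + 4m + 4)` and `G = -(m + 1)/(3K)`. They
meet only at `τ = -3`, `m = -1/3`, where `K = 1/3`. Thus for `κ ≠ 0` the fibre `K = κ` has two
points if `κ = 1/3`, where `m = -1` is missing and the components meet; three points if `κ = 3/8`,
where the two values of `m` agree; and four points otherwise. The fibre over `1/3` must therefore
be mapped to itself, giving `r = 1/9`, while the fibre over `3/8` must be mapped to itself, giving
`r = 9/64`. Only the bounds on the number of points needed for this contradiction are proved. -/

/-! ### Fibres of `K` on the curve `P = 0` -/

/-- The point `(a, b)` of the `(u, v)`-plane lies on `P = 0` and has `K = κ`. The last two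
equations are `H = 27K³` and `K = κ`, written in terms of the values `f`, `g` of `F`, `G`. -/
def InFibre (κ a b f g : ℂ) : Prop :=
  f = -3 * (a * b - 1) ∧ g = a * f + 4 / 9 ∧ 4 * b - 3 * f ^ 2 = 27 * κ ^ 3 ∧
    (a - g ^ 2) * (4 * b - 3 * f ^ 2) + f * g - 1 = κ

namespace InFibre

variable {κ a b f g : ℂ}

lemma rel_two (h : InFibre κ a b f g) : a * (27 * κ ^ 3) = 4 - 3 * (f * g) := by
  obtain ⟨h1, h2, h3, h4⟩ := h
  linear_combination -a * h3 + 4 / 3 * h1 + 3 * f * h2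

lemma rel_one (h : InFibre κ a b f g) : 27 * κ ^ 3 * g ^ 2 = 3 - κ - 2 * (f * g) := by
  have e2 := h.rel_two
  obtain ⟨h1, h2, h3, h4⟩ := h
  rw [h3] at h4
  linear_combination -h4 + e2

/-- The values of `G` on the fibre over `κ` are roots of this product, whose first factor
belongs to the component parametrized by `τ` and whose second factor to the other one. -/
lemma quartic (h : InFibre κ a b f g) :
    (81 * g ^ 2 * κ ^ 3 - 18 * g * κ ^ 2 + κ - 3) *
      (27 * g ^ 2 * κ ^ 3 + 6 * g * κ ^ 2 + 3 * κ - 1) = 0 := by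
  have e1 := h.rel_one
  have e2 := h.rel_two
  obtain ⟨h1, h2, h3, h4⟩ := h
  have e3 : f * (4 - 3 * (f * g)) = 27 * κ ^ 3 * g - 12 * κ ^ 3 := by
    linear_combination -f * e2 - 27 * κ ^ 3 * h2
  have hX : f * g = (3 - κ - 27 * κ ^ 3 * g ^ 2) / 2 := by linear_combination e1 / 2
  have e4 : 4 * (f * g) - 3 * (f * g) ^ 2 = 27 * κ ^ 3 * g ^ 2 - 12 * κ ^ 3 * g := by
    linear_combination g * e3
  rw [hX] at e4
  linear_combination -4 * e4

/-- Away from `G = 0` a point of the fibre is determined by its value of `G`. -/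
lemma eq_of_g_eq {a' b' f' : ℂ} (hκ : κ ≠ 0) (hg : g ≠ 0) (h : InFibre κ a b f g)
    (h' : InFibre κ a' b' f' g) : a = a' ∧ b = b' := by
  have e1 := h.rel_one
  have e1' := h'.rel_one
  have e2 := h.rel_two
  have e2' := h'.rel_two
  have hf : f = f' := by
    apply mul_right_cancel₀ hg
    linear_combination (e1 - e1') / 2
  subst hf
  constructor
  · apply mul_right_cancel₀ (b := 27 * κ ^ 3) (by simpa using hκ)
    rw [e2, e2']
  · linear_combination (h.2.2.1 - h'.2.2.1) / 4

lemma g_third (h : InFibre (1 / 3) a b f g) : g ≠ 0 ∧ (g = 4 / 3 ∨ g = -2 / 3) := by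
  have h0 : g ≠ 0 := by
    rintro rfl
    have := h.rel_one
    norm_num at this
  refine ⟨h0, ?_⟩
  have hq := h.quartic
  have : g * ((g - 4 / 3) * ((g + 2 / 3) * (g + 2 / 3))) = 0 := by
    linear_combination hq / 3
  have := (mul_eq_zero.1 this).resolve_left h0
  rcases mul_eq_zero.1 this with h | h
  · left; linear_combination h
  · right
    have := mul_self_eq_zero.1 h
    linear_combination this

lemma g_three_eighths {w : ℂ} (hw : w ^ 2 = 8) (h : InFibre (3 / 8) a b f g) :
    g ≠ 0 ∧ (g = -8 / 27 ∨ g = 8 / 27 * (1 + w) ∨ g = 8 / 27 * (1 - w)) := by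
  have h0 : g ≠ 0 := by
    rintro rfl
    have := h.rel_one
    norm_num at this
  refine ⟨h0, ?_⟩
  have hq := h.quartic
  have : ((g + 8 / 27) * (g + 8 / 27)) *
      ((g - 8 / 27 * (1 + w)) * (g - 8 / 27 * (1 - w))) = 0 := by
    linear_combination 512 / 729 * 512 / 2187 * hq -
      (g + 8 / 27) ^ 2 * (8 / 27) ^ 2 * hw
  rcases mul_eq_zero.1 this with h | h
  · left
    have := mul_self_eq_zero.1 h
    linear_combination this
  · right
    rcases mul_eq_zero.1 h with h | h
    · left; linear_combination h
    · right; linear_combination h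

/-- The parametrization of the first component. -/
lemma of_tau {t : ℂ} (ht : t ≠ 0) :
    InFibre (3 / t ^ 2) (t ^ 4 * (t ^ 2 + 3 * t + 6) / 729) (729 * (t ^ 2 - 3 * t + 3) / t ^ 8)
      (27 * (t - 2) / t ^ 4) (t ^ 2 * (t + 1) / 27) := by
  refine ⟨?_, ?_, ?_, ?_⟩ <;> field_simp <;> ring

/-- The parametrization of the second component, with `z = 1/K`. -/
lemma of_m {m z : ℂ} (hz : z = 3 * m ^ 2 + 4 * m + 4) (hz0 : z ≠ 0) (hm : m + 1 ≠ 0) :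
    InFibre (1 / z) (z ^ 2 * (z + 3 * m) / 27)
      (27 / 4 * (1 / z ^ 3 + (z - m) ^ 2 / (z ^ 4 * (m + 1) ^ 2)))
      (-3 * (z - m) / (z ^ 2 * (m + 1))) (-(m + 1) * z / 3) := by
  refine ⟨?_, ?_, ?_, ?_⟩
  · field_simp
    rw [hz]; ring
  · field_simp
    rw [hz]; ring
  · field_simp
    rw [hz]; ring
  · field_simp
    rw [hz]; ring

end InFibre

/-! ### Counting points in fibres -/

/-- The fibre of the curve `P = 0` over `K = κ` has at least `n` points in the `(u, v)`-plane. -/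
def HasPoints (n : ℕ) (κ : ℂ) : Prop :=
  ∃ Q : Fin n → ℂ × ℂ, Function.Injective Q ∧ ∀ i, ∃ f g, InFibre κ (Q i).1 (Q i).2 f g

/-- Points with different values of `G` are different. -/
lemma HasPoints.of_injective {n : ℕ} {κ : ℂ} (g : Fin n → ℂ) (hg : Function.Injective g)
    (h : ∀ i, ∃ a b f, InFibre κ a b f (g i)) : HasPoints n κ := by
  choose a b f h using h
  refine ⟨fun i => (a i, b i), fun i j hij => hg ?_, fun i => ⟨_, _, h i⟩⟩
  simp only [Prod.mk.injEq] at hij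
  obtain ⟨hf, hG, -⟩ := h i
  obtain ⟨hf', hG', -⟩ := h j
  rw [hG, hG', hf, hf', hij.1, hij.2]

/-- The values of `G` separate the points of a fibre on which `G` does not vanish. -/
lemma HasPoints.le_card {n : ℕ} {κ : ℂ} (hκ : κ ≠ 0) (s : Finset ℂ)
    (hs : ∀ a b f g, InFibre κ a b f g → g ≠ 0 ∧ g ∈ s) (h : HasPoints n κ) : n ≤ s.card := by
  obtain ⟨Q, hQ, h⟩ := h
  choose f g h using h
  have hg : Function.Injective g := by
    intro i j hij
    have hj := h j
    rw [← hij] at hj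
    obtain ⟨h1, h2⟩ := (h i).eq_of_g_eq hκ (hs _ _ _ _ (h i)).1 hj
    exact hQ (Prod.ext h1 h2)
  simpa using Finset.card_le_card_of_injOn (s := Finset.univ) (t := s) g
    (fun i _ => (hs _ _ _ _ (h i)).2) hg.injOn

lemma not_hasPoints_third : ¬ HasPoints 3 (1 / 3) := by
  intro h
  have h1 := h.le_card (by norm_num) {4 / 3, -2 / 3}
    (fun a b f g h => by simpa using h.g_third)
  have h2 : ({4 / 3, -2 / 3} : Finset ℂ).card ≤ 2 := Finset.card_le_two
  omega

lemma not_hasPoints_three_eighths : ¬ HasPoints 4 (3 / 8) := by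
  intro h
  obtain ⟨w, hw⟩ := IsAlgClosed.exists_pow_nat_eq (8 : ℂ) two_pos
  have h1 := h.le_card (by norm_num) {-8 / 27, 8 / 27 * (1 + w), 8 / 27 * (1 - w)}
    (fun a b f g h => by simpa using h.g_three_eighths hw)
  have h2 := Finset.card_le_three (a := -8 / 27) (b := 8 / 27 * (1 + w)) (c := 8 / 27 * (1 - w))
  omega

lemma not_hasPoints_zero : ¬ HasPoints 3 0 := by
  rintro ⟨Q, -, h⟩
  obtain ⟨f, g, h⟩ := h 0
  have h1 := h.rel_one
  have h2 := h.rel_two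
  have : (1 : ℂ) = 0 := by linear_combination -3 * h1 + 2 * h2
  exact one_ne_zero this

/-- The values of `G` at the points `τ = t` and `m` of the fibre `K = 1/z`, `z ≠ 3`, differ, as the
two components meet only over `K = 1/3`. -/
lemma g_ne {m z t : ℂ} (ht : t ^ 2 = 3 * z) (hz : z = 3 * m ^ 2 + 4 * m + 4) (hz0 : z ≠ 0)
    (hz3 : z ≠ 3) : t ^ 2 * (t + 1) / 27 ≠ -(m + 1) * z / 3 := by
  intro h
  have h1 : t = -3 * m - 4 := by
    apply mul_right_cancel₀ hz0
    rw [ht] at h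
    linear_combination 9 * h
  have h2 : m = -1 / 3 := by
    rw [h1, hz] at ht
    linear_combination ht / 12
  apply hz3
  rw [hz, h2]; norm_num

lemma g_tau_ne {t : ℂ} (ht0 : t ≠ 0) :
    t ^ 2 * (t + 1) / 27 ≠ (-t) ^ 2 * (-t + 1) / 27 := by
  intro h
  have : t ^ 3 = 0 := by linear_combination 27 / 2 * h
  exact ht0 (by simpa using this)

lemma add_one_ne_zero_of_ne {m z : ℂ} (hz : z = 3 * m ^ 2 + 4 * m + 4) (hz3 : z ≠ 3) :
    m + 1 ≠ 0 := by
  intro h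
  apply hz3
  rw [hz, eq_neg_of_add_eq_zero_left h]; norm_num

lemma hasPoints_three {κ : ℂ} (hκ : κ ≠ 0) (hκ3 : κ ≠ 1 / 3) : HasPoints 3 κ := by
  obtain ⟨z, rfl⟩ : ∃ z, κ = 1 / z := ⟨1 / κ, by simp⟩
  have hz0 : z ≠ 0 := by rintro rfl; simp at hκ
  have hz3 : z ≠ 3 := by rintro rfl; simp at hκ3
  obtain ⟨t, ht⟩ := IsAlgClosed.exists_pow_nat_eq (3 * z) two_pos
  obtain ⟨d, hd⟩ := IsAlgClosed.exists_pow_nat_eq (3 * z - 8) two_pos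
  obtain ⟨m, hm⟩ : ∃ m, m = (d - 2) / 3 := ⟨_, rfl⟩
  have hz : z = 3 * m ^ 2 + 4 * m + 4 := by rw [hm]; linear_combination -hd / 3
  have hm1 := add_one_ne_zero_of_ne hz hz3
  have ht0 : t ≠ 0 := by rintro rfl; simp [hz0] at ht
  have ht' : (-t) ^ 2 = 3 * z := by rw [neg_sq, ht]
  have hκt : ∀ s : ℂ, s ^ 2 = 3 * z → 3 / s ^ 2 = 1 / z := by
    intro s hs; rw [hs]; field_simp
  have n1 := g_ne ht hz hz0 hz3
  have n2 := g_ne ht' hz hz0 hz3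
  have n3 := g_tau_ne ht0
  refine HasPoints.of_injective
    ![t ^ 2 * (t + 1) / 27, (-t) ^ 2 * (-t + 1) / 27, -(m + 1) * z / 3] ?_ ?_
  · intro i j hij
    fin_cases i <;> fin_cases j <;> first | rfl | (exfalso; simp_all)
  · intro i
    fin_cases i
    · exact ⟨_, _, _, hκt t ht ▸ InFibre.of_tau ht0⟩
    · exact ⟨_, _, _, hκt (-t) ht' ▸ InFibre.of_tau (neg_ne_zero.2 ht0)⟩
    · exact ⟨_, _, _, InFibre.of_m hz hz0 hm1⟩

lemma hasPoints_four : HasPoints 4 (8 / 27) := by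
  obtain ⟨z, hz'⟩ : ∃ z : ℂ, z = 27 / 8 := ⟨_, rfl⟩
  have hκ : (8 / 27 : ℂ) = 1 / z := by rw [hz']; norm_num
  rw [hκ]
  have hz0 : z ≠ 0 := by rw [hz']; norm_num
  have hz3 : z ≠ 3 := by rw [hz']; norm_num
  obtain ⟨t, ht⟩ := IsAlgClosed.exists_pow_nat_eq (3 * z) two_pos
  obtain ⟨d, hd⟩ := IsAlgClosed.exists_pow_nat_eq (3 * z - 8) two_pos
  have hd0 : d ≠ 0 := by
    rintro rfl
    rw [hz'] at hd
    norm_num at hd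
  obtain ⟨m, hm⟩ : ∃ m, m = (d - 2) / 3 := ⟨_, rfl⟩
  obtain ⟨m', hm'⟩ : ∃ m', m' = (-d - 2) / 3 := ⟨_, rfl⟩
  have hz : z = 3 * m ^ 2 + 4 * m + 4 := by rw [hm]; linear_combination -hd / 3
  have hzm : z = 3 * m' ^ 2 + 4 * m' + 4 := by rw [hm']; linear_combination -hd / 3
  have hm1 := add_one_ne_zero_of_ne hz hz3
  have hm2 := add_one_ne_zero_of_ne hzm hz3
  have ht0 : t ≠ 0 := by rintro rfl; simp [hz0] at ht
  have ht' : (-t) ^ 2 = 3 * z := by rw [neg_sq, ht]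
  have hκt : ∀ s : ℂ, s ^ 2 = 3 * z → 3 / s ^ 2 = 1 / z := by
    intro s hs; rw [hs]; field_simp
  have n1 := g_ne ht hz hz0 hz3
  have n2 := g_ne ht' hz hz0 hz3
  have n3 := g_tau_ne ht0
  have n4 := g_ne ht hzm hz0 hz3
  have n5 := g_ne ht' hzm hz0 hz3
  have n6 : -(m + 1) * z / 3 ≠ -(m' + 1) * z / 3 := by
    intro h
    have : m = m' := by
      apply mul_right_cancel₀ hz0
      linear_combination -3 * h
    apply hd0
    rw [hm, hm'] at this
    linear_combination 3 / 2 * this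
  refine HasPoints.of_injective
    ![t ^ 2 * (t + 1) / 27, (-t) ^ 2 * (-t + 1) / 27, -(m + 1) * z / 3, -(m' + 1) * z / 3] ?_ ?_
  · intro i j hij
    fin_cases i <;> fin_cases j <;>
      first | rfl | exact absurd hij ‹_› | exact absurd hij.symm ‹_›
  · intro i
    fin_cases i
    · exact ⟨_, _, _, hκt t ht ▸ InFibre.of_tau ht0⟩
    · exact ⟨_, _, _, hκt (-t) ht' ▸ InFibre.of_tau (neg_ne_zero.2 ht0)⟩
    · exact ⟨_, _, _, InFibre.of_m hz hz0 hm1⟩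
    · exact ⟨_, _, _, InFibre.of_m hzm hz0 hm2⟩

/-! ### Coordinates and complex conjugation -/

/-- The kernels of the iterates of `f` form an ascending chain, which is stationary. -/
lemma injective_of_surjective_ringHom {R : Type*} [CommRing R] [IsNoetherianRing R] (f : R →+* R)
    (hf : Function.Surjective f) : Function.Injective f := by
  let c : ℕ →o Ideal R := ⟨fun n => RingHom.ker (f ^ n), monotone_nat_of_le_succ fun n x hx => by
    rw [RingHom.mem_ker] at hx ⊢
    rw [pow_succ', RingHom.mul_def, RingHom.comp_apply, hx, map_zero]⟩
  obtain ⟨n, hn⟩ := monotone_stabilizes_iff_noetherian.2 ‹IsNoetherianRing R› c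
  rw [injective_iff_map_eq_zero]
  intro x hx
  have hfn : Function.Surjective (f ^ n) := by
    rw [RingHom.coe_pow]
    exact hf.iterate n
  obtain ⟨y, rfl⟩ := hfn x
  have hy : y ∈ c (n + 1) := by
    change (f ^ (n + 1)) y = 0
    rw [pow_succ', RingHom.mul_def, RingHom.comp_apply, hx]
  rw [← hn (n + 1) n.le_succ] at hy
  exact hy

/-- Polynomials `u, v` that generate `ℂ[x, y]` are coordinates of the plane: the surjective
endomorphism `x ↦ u`, `y ↦ v` is an automorphism. -/
lemma bijective_coords {u v : MvPolynomial (Fin 2) ℂ} (huv : Algebra.adjoin ℂ {u, v} = ⊤) :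
    Function.Bijective (fun p : Fin 2 → ℂ => (eval p u, eval p v)) := by
  have hs : Function.Surjective (aeval ![u, v] : MvPolynomial (Fin 2) ℂ →ₐ[ℂ] _) := by
    rw [← AlgHom.range_eq_top, ← Algebra.adjoin_range_eq_range_aeval]
    rw [Matrix.range_cons_cons_empty]
    exact huv
  have hi : Function.Injective (aeval ![u, v] : MvPolynomial (Fin 2) ℂ →ₐ[ℂ] _) :=
    injective_of_surjective_ringHom (aeval ![u, v] : MvPolynomial (Fin 2) ℂ →ₐ[ℂ] _).toRingHom hs
  let e := AlgEquiv.ofBijective _ ⟨hi, hs⟩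
  have he : ∀ q, e q = aeval ![u, v] q := fun q => rfl
  have key : ∀ (p : Fin 2 → ℂ) q, eval p (e q) = eval ![eval p u, eval p v] q := by
    intro p q
    have : ((aeval p).comp (aeval ![u, v]) : MvPolynomial (Fin 2) ℂ →ₐ[ℂ] ℂ)
        = aeval ![eval p u, eval p v] := by
      ext i
      fin_cases i <;> simp [aeval_eq_eval]
    exact DFunLike.congr_fun this q
  constructor
  · intro p p' h
    simp only [Prod.mk.injEq] at h
    funext i
    have h1 := key p (e.symm (X i))
    have h2 := key p' (e.symm (X i))
    rw [h.1, h.2, ← h2] at h1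
    simpa using h1
  · rintro ⟨a, b⟩
    let p : Fin 2 → ℂ := fun i => eval ![a, b] (e.symm (X i))
    have hp : ∀ q, eval p q = eval ![a, b] (e.symm q) := by
      intro q
      have : (aeval p : MvPolynomial (Fin 2) ℂ →ₐ[ℂ] ℂ)
        = (aeval ![a, b]).comp e.symm.toAlgHom := by
        ext i
        simp [p, aeval_eq_eval]
      exact DFunLike.congr_fun this q
    refine ⟨p, ?_⟩
    have h0 : u = e (X 0) := by simp [he]
    have h1 : v = e (X 1) := by simp [he]
    simp only [hp]
    nth_rw 1 [h0]
    nth_rw 1 [h1]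
    simp

/-- A polynomial equal to its conjugate has real coefficients. -/
lemma exists_real_of_conj_eq {f : MvPolynomial (Fin 2) ℂ} (hf : map (starRingEnd ℂ) f = f) :
    ∃ f₀ : MvPolynomial (Fin 2) ℝ, map (algebraMap ℝ ℂ) f₀ = f := by
  apply mem_range_map_iff_coeffs_subset.2
  intro c hc
  obtain ⟨n, -, rfl⟩ := mem_coeffs_iff.1 hc
  have : (starRingEnd ℂ) (f.coeff n) = f.coeff n := by
    rw [← coeff_map, hf]
  exact Complex.conj_eq_iff_real.1 this |>.imp fun r hr => hr.symm

lemma eval_conj (f : MvPolynomial (Fin 2) ℂ) (p : Fin 2 → ℂ) :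
    eval p (map (starRingEnd ℂ) f) = starRingEnd ℂ (eval (fun i => starRingEnd ℂ (p i)) f) := by
  induction f using MvPolynomial.induction_on with
  | C a => simp
  | add f g hf hg => simp [hf, hg]
  | mul_X f i hf => simp [hf]

lemma conj_real (f : MvPolynomial (Fin 2) ℝ) :
    map (starRingEnd ℂ) (map (algebraMap ℝ ℂ) f) = map (algebraMap ℝ ℂ) f := by
  rw [map_map]
  congr 2
  ext r
  exact Complex.conj_ofReal r

/-! ### The unit `K·K̄` -/

/-- Sporadic embedding, form (iii.2): if `P = 4v − 3F² − 27((u − G²)H + FG − 1)³` with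
`F = −3(uv − 1)`, `G = uF + 4/9`, `H = 4v − 3F²`, and `P` has real coefficients,
then `(A/PA)* ≠ ℝ*`. -/
theorem stmt_9 (u v : MvPolynomial (Fin 2) ℂ)
    (huv : Algebra.adjoin ℂ {u, v} = ⊤)
    (F G H : MvPolynomial (Fin 2) ℂ)
    (hF : F = -3 * (u * v - 1))
    (hG : G = u * F + MvPolynomial.C ((4 : ℂ) / 9))
    (hH : H = 4 * v - 3 * F ^ 2)
    (P : MvPolynomial (Fin 2) ℂ)
    (hP : P = 4 * v - 3 * F ^ 2 - 27 * ((u - G ^ 2) * H + F * G - 1) ^ 3)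
    (P₀ : MvPolynomial (Fin 2) ℝ)
    (hP₀ : MvPolynomial.map (algebraMap ℝ ℂ) P₀ = P) :
    ∃ w : (MvPolynomial (Fin 2) ℝ ⧸ Ideal.span {P₀})ˣ,
      ∀ r : ℝ, (w : MvPolynomial (Fin 2) ℝ ⧸ Ideal.span {P₀}) ≠
        algebraMap ℝ (MvPolynomial (Fin 2) ℝ ⧸ Ideal.span {P₀}) r := by
  obtain ⟨K, hK⟩ : ∃ K, K = (u - G ^ 2) * H + F * G - 1 := ⟨_, rfl⟩
  obtain ⟨L, hL⟩ : ∃ L, L = 3 - 54 * u * K ^ 2 + 81 * K ^ 2 * G ^ 2 := ⟨_, rfl⟩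
  obtain ⟨Q, hQ⟩ : ∃ Q, Q = 2 * u - 3 * G ^ 2 := ⟨_, rfl⟩
  rw [← hK, ← hH] at hP
  have hC : (9 : MvPolynomial (Fin 2) ℂ) * C (4 / 9) = 4 := by
    rw [← map_ofNat C 9, ← map_mul]
    norm_num
    rw [map_ofNat]
  have hUH : u * H + 3 * (F * G) = 4 := by
    linear_combination u * hH + 3 * F * hG + 3 * C (4 / 9) * hF - (u * v - 1) * hC
  have hKL : K * L = 1 + P * Q := by
    linear_combination K * hL + 3 * hK + hUH - Q * hP - (H - 27 * K ^ 3) * hQ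
  -- conjugation of coefficients, an involution of `ℂ[x, y]` that fixes `P`
  let c := map (σ := Fin 2) (starRingEnd ℂ)
  have hcc : ∀ f, c (c f) = f := by
    intro f
    simp only [c, map_map]
    convert map_id f
    ext1 z
    simp
  have hcP : c P = P := by rw [← hP₀]; exact conj_real P₀
  have hcKL : c K * c L = 1 + P * c Q := by
    rw [← map_mul, hKL, map_add, map_mul, hcP, map_one]
  obtain ⟨N₀, hN⟩ := exists_real_of_conj_eq (f := K * c K) (by
    change c _ = _; rw [map_mul, hcc, mul_comm])
  obtain ⟨M₀, hM⟩ := exists_real_of_conj_eq (f := L * c L) (by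
    change c _ = _; rw [map_mul, hcc, mul_comm])
  obtain ⟨S₀, hS⟩ := exists_real_of_conj_eq (f := Q + c Q + P * (Q * c Q)) (by
    change c _ = _; simp only [map_mul, map_add, hcc, hcP]; ring)
  have hinj : Function.Injective (map (σ := Fin 2) (algebraMap ℝ ℂ)) :=
    map_injective _ (algebraMap ℝ ℂ).injective
  have hNM : N₀ * M₀ - 1 = P₀ * S₀ := by
    apply hinj
    simp only [map_sub, map_mul, map_one, hN, hM, hS, hP₀]
    linear_combination c K * c L * hKL + (1 + P * Q) * hcKL
  let π := Ideal.Quotient.mk (Ideal.span {P₀})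
  have hunit : π N₀ * π M₀ = 1 := by
    rw [← map_mul, ← map_one π, Ideal.Quotient.eq, Ideal.mem_span_singleton]
    exact ⟨S₀, hNM⟩
  refine ⟨⟨π N₀, π M₀, hunit, by rw [mul_comm, hunit]⟩, fun r hr => ?_⟩
  obtain ⟨T₀, hT⟩ : ∃ T₀, N₀ - C r = P₀ * T₀ := by
    exact Ideal.mem_span_singleton.1 (Ideal.Quotient.eq.1 hr)
  have hnorm : K * c K = C (r : ℂ) + P * map (algebraMap ℝ ℂ) T₀ := by
    have := congrArg (map (algebraMap ℝ ℂ)) hT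
    simp only [map_sub, map_mul, hN, hP₀, map_C] at this
    linear_combination this
  -- Complex conjugation on `ℂ²` preserves the curve and maps the fibre over `κ` to
  -- the one over `r / κ̄`.
  have transfer : ∀ n κ, κ ≠ 0 → HasPoints n κ → HasPoints n (r / starRingEnd ℂ κ) := by
    rintro n κ hκ ⟨Z, hZ, hfib⟩
    obtain ⟨coords_inj, coords_surj⟩ := bijective_coords huv
    choose p hp using fun i => coords_surj (Z i)
    have hval : ∀ q : Fin 2 → ℂ, eval q F = -3 * (eval q u * eval q v - 1) ∧
        eval q G = eval q u * eval q F + 4 / 9 ∧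
        eval q H = 4 * eval q v - 3 * eval q F ^ 2 ∧
        eval q K = (eval q u - eval q G ^ 2) * eval q H + eval q F * eval q G - 1 ∧
        eval q P = eval q H - 27 * eval q K ^ 3 := by
      intro q
      refine ⟨?_, ?_, ?_, ?_, ?_⟩
      · rw [hF]; simp
      · rw [hG]; simp
      · rw [hH]; simp
      · rw [hK]; simp
      · rw [hP]; simp
    have hpZ : ∀ i, eval (p i) P = 0 ∧ eval (p i) K = κ := by
      intro i
      obtain ⟨f, g, h1, h2, h3, h4⟩ := hfib i
      rw [← hp i] at h1 h2 h3 h4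
      obtain ⟨e1, e2, e3, e4, e5⟩ := hval (p i)
      have hf : eval (p i) F = f := by rw [e1, h1]
      have hg : eval (p i) G = g := by rw [e2, h2, hf]
      rw [hf] at e3
      have hk : eval (p i) K = κ := by rw [e4, hf, hg, e3, ← h4]
      exact ⟨by rw [e5, hk, e3, h3, sub_self], hk⟩
    let p' : Fin n → Fin 2 → ℂ := fun i j => starRingEnd ℂ (p i j)
    have hp'inj : Function.Injective p' := by
      intro i j hij
      apply hZ
      rw [← hp i, ← hp j]
      have : p i = p j := by
        funext k
        exact (starRingEnd ℂ).injective (congrFun hij k)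
      rw [this]
    refine ⟨fun i => (eval (p' i) u, eval (p' i) v), coords_inj.comp hp'inj,
      fun i => ⟨eval (p' i) F, eval (p' i) G, ?_⟩⟩
    obtain ⟨hi1, hi2⟩ := hpZ i
    have hP' : eval (p' i) P = 0 := by
      have := eval_conj P (p i)
      rw [show map (starRingEnd ℂ) P = P from hcP, hi1] at this
      simpa using congrArg (starRingEnd ℂ) this.symm
    have hK' : eval (p' i) K = r / starRingEnd ℂ κ := by
      have h1 : eval (p i) (c K) = starRingEnd ℂ (eval (p' i) K) := eval_conj K (p i)
      have h2 := congrArg (eval (p i)) hnorm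
      simp only [map_mul, map_add, hi1, hi2, eval_C, zero_mul, add_zero, h1] at h2
      have h3 := congrArg (starRingEnd ℂ) h2
      rw [map_mul, Complex.conj_conj, Complex.conj_ofReal] at h3
      rw [eq_div_iff ((map_ne_zero _).2 hκ), mul_comm, h3]
    obtain ⟨e1, e2, e3, e4, e5⟩ := hval (p' i)
    rw [hP', hK'] at e5
    rw [hK'] at e4
    exact ⟨e1, e2, by rw [← e3]; linear_combination -e5, by rw [← e3]; exact e4.symm⟩
  have hr0 : r ≠ 0 := by
    rintro rfl
    have := transfer 3 1 one_ne_zero (hasPoints_three one_ne_zero (by norm_num))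
    exact not_hasPoints_zero (by simpa using this)
  -- The fibre over `3r` is mapped to the one over `1/3`, which has fewer than three points.
  have hr9 : r = 1 / 9 := by
    by_contra h
    have := transfer 3 (3 * r) (by simpa using hr0) (hasPoints_three (by simpa using hr0) (by
      intro h'
      apply h
      have : ((r : ℝ) : ℂ) = ((1 / 9 : ℝ) : ℂ) := by push_cast; linear_combination h' / 3
      exact_mod_cast this))
    have hr0' : (r : ℂ) ≠ 0 := by exact_mod_cast hr0
    apply not_hasPoints_third
    convert this using 1
    rw [map_mul, Complex.conj_ofReal, map_ofNat]
    field_simp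
  -- For `r = 1/9` the fibre over `8/27` is mapped to the one over `3/8`.
  have := transfer 4 (8 / 27) (by norm_num) hasPoints_four
  apply not_hasPoints_three_eighths
  convert this using 1
  rw [hr9, map_div₀, map_ofNat, map_ofNat]
  norm_num
end

section
/- Let A be a commutative ℝ-algebra which is an integral domain, let B = ℂ ⊗_ℝ A, and assume B is an integral domain. Let σ : B → B be the conjugation automorphism conj ⊗ id_A (so σ(z ⊗ a) = z̄ ⊗ a). Assume every unit of A is the image of a nonzero real number under the structure map ℝ → A. Then for every unit f of B there exists a nonzero real number λ such that f⁻¹ = λ·σ(f). -/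
open TensorProduct

/-!
Write `N x = x * σ x`. Since `ℂ = ℝ ⊕ ℝ i`, every `x : ℂ ⊗[ℝ] A` has the form `1 ⊗ a + i ⊗ b`
(`exists_eq_one_tmul_add_I_tmul`), whence `N x = 1 ⊗ (a² + b²)` comes from `A` (`exists_norm`).
If `f` is a unit, then `N f * N f⁻¹ = 1`, and as `A → ℂ ⊗[ℝ] A` is injective the element
`a² + b²` of `A` is a unit, hence a nonzero real number `r`. So `f * σ f = r`, that is,
`f⁻¹ = r⁻¹ * σ f`.
-/

theorem exists_eq_one_tmul_add_I_tmul {A : Type*} [CommRing A] [Algebra ℝ A] (x : ℂ ⊗[ℝ] A) :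
    ∃ a b : A, x = (1 : ℂ) ⊗ₜ[ℝ] a + Complex.I ⊗ₜ[ℝ] b := by
  induction x with
  | zero => exact ⟨0, 0, by simp⟩
  | tmul z a =>
    refine ⟨z.re • a, z.im • a, ?_⟩
    rw [← TensorProduct.smul_tmul, ← TensorProduct.smul_tmul, ← TensorProduct.add_tmul]
    congr 1
    apply Complex.ext <;> simp
  | add x y hx hy =>
    obtain ⟨a, b, rfl⟩ := hx
    obtain ⟨c, d, rfl⟩ := hy
    refine ⟨a + c, b + d, ?_⟩
    rw [TensorProduct.tmul_add, TensorProduct.tmul_add]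
    abel

theorem exists_norm {A : Type*} [CommRing A] [Algebra ℝ A] (x : ℂ ⊗[ℝ] A) :
    ∃ n : A, x * (Algebra.TensorProduct.map Complex.conjAe.toAlgHom (AlgHom.id ℝ A)) x =
      (1 : ℂ) ⊗ₜ[ℝ] n := by
  obtain ⟨a, b, rfl⟩ := exists_eq_one_tmul_add_I_tmul x
  refine ⟨a * a + b * b, ?_⟩
  simp only [map_add, Algebra.TensorProduct.map_tmul, mul_add, add_mul,
    Algebra.TensorProduct.tmul_mul_tmul, TensorProduct.tmul_add]
  simp [TensorProduct.neg_tmul, mul_comm b a]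

/-- If `A` is a real domain with `A* = ℝ*` and `B = ℂ ⊗_ℝ A` is a domain, then for every
unit `f` of `B` one has `f⁻¹ = λ·σ(f)` for some nonzero real `λ`, where `σ` is the
conjugation automorphism of `B`. -/
theorem stmt_10 (A : Type*) [CommRing A] [IsDomain A] [Algebra ℝ A]
    [IsDomain (ℂ ⊗[ℝ] A)]
    (hA : ∀ w : Aˣ, ∃ r : ℝ, r ≠ 0 ∧ (w : A) = algebraMap ℝ A r)
    (f : (ℂ ⊗[ℝ] A)ˣ) :
    ∃ lam : ℝ, lam ≠ 0 ∧
      ((f⁻¹ : (ℂ ⊗[ℝ] A)ˣ) : ℂ ⊗[ℝ] A) =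
        algebraMap ℝ (ℂ ⊗[ℝ] A) lam *
          (Algebra.TensorProduct.map Complex.conjAe.toAlgHom (AlgHom.id ℝ A))
            (f : ℂ ⊗[ℝ] A) := by
  obtain ⟨n, hn⟩ := exists_norm (f : ℂ ⊗[ℝ] A)
  obtain ⟨m, hm⟩ := exists_norm ((f⁻¹ : (ℂ ⊗[ℝ] A)ˣ) : ℂ ⊗[ℝ] A)
  set σ := Algebra.TensorProduct.map Complex.conjAe.toAlgHom (AlgHom.id ℝ A)
  have hnm : n * m = 1 := by
    have hinj : Function.Injective (Algebra.TensorProduct.includeRight : A →ₐ[ℝ] ℂ ⊗[ℝ] A) :=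
      Algebra.TensorProduct.includeRight_injective (algebraMap ℝ ℂ).injective
    apply hinj
    rw [map_mul, map_one, Algebra.TensorProduct.includeRight_apply,
      Algebra.TensorProduct.includeRight_apply, ← hn, ← hm, mul_mul_mul_comm, ← map_mul,
      Units.mul_inv, map_one, one_mul]
  obtain ⟨r, hr, hnr⟩ := hA (Units.mkOfMulEqOne n m hnm)
  rw [Units.val_mkOfMulEqOne] at hnr
  refine ⟨r⁻¹, inv_ne_zero hr, ?_⟩
  have hfr : (f : ℂ ⊗[ℝ] A) * σ f = algebraMap ℝ (ℂ ⊗[ℝ] A) r := by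
    rw [hn, hnr, ← Algebra.TensorProduct.includeRight_apply, AlgHom.commutes]
  apply Units.inv_eq_of_mul_eq_one_right
  rw [mul_left_comm, hfr, ← map_mul, inv_mul_cancel₀ hr, map_one]
end

section
/- Let P₀ ∈ ℝ[x,y] be a non-constant polynomial whose image P in ℂ[x,y] is a prime element, and assume every unit of the quotient ring ℝ[x,y]/(P₀) is the residue class of a nonzero real constant. Let f ∈ ℂ[x,y] be such that the residue class of f in ℂ[x,y]/(P) is a unit. Then either f is a nonzero constant (a unit of ℂ[x,y]) or totaldeg(P) ≤ 2·totaldeg(f). -/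
/-! If `f` is a unit modulo `P` with inverse `g`, then the norms `f * f̄` and `g * ḡ` (with `̄`
the coefficientwise complex conjugation) have real coefficients and are inverse to each other
modulo `P₀`, since divisibility by `P₀` descends from `ℂ[x,y]` to `ℝ[x,y]`. By the hypothesis on
units, `f * f̄ - r = P * q` for a nonzero real `r`. If `q = 0` then `f * f̄ = r`, so `f` is a unit;
otherwise `deg P ≤ deg (f * f̄) ≤ 2 deg f`. -/

open MvPolynomial

lemma exists_map_eq_of_conj_eq_s11 (p : MvPolynomial (Fin 2) ℂ)
    (hp : map (starRingEnd ℂ) p = p) :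
    ∃ p₀ : MvPolynomial (Fin 2) ℝ, map (algebraMap ℝ ℂ) p₀ = p := by
  refine (mem_range_map_iff_coeffs_subset (f := algebraMap ℝ ℂ)).2 ?_
  intro c hc
  obtain ⟨m, -, rfl⟩ := mem_coeffs_iff.1 hc
  obtain ⟨r, hr⟩ := Complex.conj_eq_iff_real.1 (by rw [← coeff_map, hp] :
    starRingEnd ℂ (coeff m p) = coeff m p)
  exact ⟨r, hr.symm⟩

lemma conj_conj_map (p : MvPolynomial (Fin 2) ℂ) :
    map (starRingEnd ℂ) (map (starRingEnd ℂ) p) = p := by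
  ext m
  simp [coeff_map]

lemma conj_map_real (p : MvPolynomial (Fin 2) ℝ) :
    map (starRingEnd ℂ) (map (algebraMap ℝ ℂ) p) = map (algebraMap ℝ ℂ) p := by
  ext m
  simp [coeff_map]

/-- Divisibility descends from `ℂ` to `ℝ`: cancelling `P` shows that the complex quotient is
conjugation-invariant. -/
lemma dvd_of_map_dvd (P F : MvPolynomial (Fin 2) ℝ)
    (hP : map (algebraMap ℝ ℂ) P ≠ 0)
    (h : map (algebraMap ℝ ℂ) P ∣ map (algebraMap ℝ ℂ) F) : P ∣ F := by
  obtain ⟨q, hq⟩ := h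
  have hq' : map (starRingEnd ℂ) q = q := by
    have h2 := congrArg (map (starRingEnd ℂ)) hq
    rw [map_mul, conj_map_real, conj_map_real, hq] at h2
    exact (mul_left_cancel₀ hP h2).symm
  obtain ⟨q₀, rfl⟩ := exists_map_eq_of_conj_eq_s11 q hq'
  refine ⟨q₀, map_injective _ (algebraMap ℝ ℂ).injective ?_⟩
  rw [hq, map_mul]

/-- The norm `f * f̄` has real coefficients. -/
lemma exists_norm_s11 (f : MvPolynomial (Fin 2) ℂ) :
    ∃ N : MvPolynomial (Fin 2) ℝ,
      map (algebraMap ℝ ℂ) N = f * map (starRingEnd ℂ) f := by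
  apply exists_map_eq_of_conj_eq_s11
  rw [map_mul, conj_conj_map, mul_comm]

/-- If `P₀ ∈ ℝ[x,y]` is non-constant, its image `P` in `ℂ[x,y]` is prime,
`(ℝ[x,y]/(P₀))* = ℝ*`, and the residue of `f ∈ ℂ[x,y]` modulo `P` is a unit, then
either `f` is a unit of `ℂ[x,y]` or `deg P ≤ 2 deg f`. -/
theorem stmt_11 (P₀ : MvPolynomial (Fin 2) ℝ)
    (hnc : P₀.totalDegree ≠ 0)
    (hprime : Prime (MvPolynomial.map (algebraMap ℝ ℂ) P₀))
    (hunits : ∀ w : (MvPolynomial (Fin 2) ℝ ⧸ Ideal.span {P₀})ˣ,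
      ∃ r : ℝ, r ≠ 0 ∧ (w : MvPolynomial (Fin 2) ℝ ⧸ Ideal.span {P₀}) =
        algebraMap ℝ (MvPolynomial (Fin 2) ℝ ⧸ Ideal.span {P₀}) r)
    (f : MvPolynomial (Fin 2) ℂ)
    (hf : IsUnit (Ideal.Quotient.mk
      (Ideal.span {MvPolynomial.map (algebraMap ℝ ℂ) P₀}) f)) :
    IsUnit f ∨
      (MvPolynomial.map (algebraMap ℝ ℂ) P₀).totalDegree ≤ 2 * f.totalDegree := by
  have hP := hprime.ne_zero
  obtain ⟨g', hg'⟩ := hf.exists_right_inv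
  obtain ⟨g, rfl⟩ := Ideal.Quotient.mk_surjective g'
  rw [← map_mul, ← map_one (Ideal.Quotient.mk _), Ideal.Quotient.eq,
    Ideal.mem_span_singleton] at hg'
  obtain ⟨h, hh⟩ := hg'
  obtain ⟨N, hN⟩ := exists_norm_s11 f
  obtain ⟨M, hM⟩ := exists_norm_s11 g
  have hc : map (starRingEnd ℂ) f * map (starRingEnd ℂ) g - 1
      = map (algebraMap ℝ ℂ) P₀ * map (starRingEnd ℂ) h := by
    have := congrArg (map (starRingEnd ℂ)) hh
    rwa [map_sub, map_mul, map_mul, map_one, conj_map_real] at this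
  have hdvd : P₀ ∣ N * M - 1 := by
    apply dvd_of_map_dvd _ _ hP
    rw [map_sub, map_mul, map_one, hN, hM]
    refine ⟨h * (map (starRingEnd ℂ) f * map (starRingEnd ℂ) g) + map (starRingEnd ℂ) h, ?_⟩
    linear_combination (map (starRingEnd ℂ) f * map (starRingEnd ℂ) g) * hh + hc
  have hNM : Ideal.Quotient.mk (Ideal.span {P₀}) N * Ideal.Quotient.mk (Ideal.span {P₀}) M
      = 1 := by
    rw [← map_mul, ← map_one (Ideal.Quotient.mk _), Ideal.Quotient.eq,
      Ideal.mem_span_singleton]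
    exact hdvd
  obtain ⟨r, hr, hrN⟩ := hunits (Units.mkOfMulEqOne _ _ hNM)
  have hrN' : Ideal.Quotient.mk (Ideal.span {P₀}) N = Ideal.Quotient.mk (Ideal.span {P₀}) (C r) :=
    hrN
  rw [Ideal.Quotient.eq, Ideal.mem_span_singleton] at hrN'
  obtain ⟨q, hq⟩ := hrN'
  have hq2 : f * map (starRingEnd ℂ) f - C (algebraMap ℝ ℂ r)
      = map (algebraMap ℝ ℂ) P₀ * map (algebraMap ℝ ℂ) q := by
    rw [← hN, ← map_mul, ← hq, map_sub, map_C]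
  by_cases hq0 : map (algebraMap ℝ ℂ) q = 0
  · left
    rw [hq0, mul_zero, sub_eq_zero] at hq2
    have hu : IsUnit (f * map (starRingEnd ℂ) f) := by
      rw [hq2]
      exact (isUnit_iff_ne_zero.2 (by simpa using hr)).map C
    exact isUnit_of_mul_isUnit_left hu
  · right
    calc (map (algebraMap ℝ ℂ) P₀).totalDegree
        ≤ (map (algebraMap ℝ ℂ) P₀ * map (algebraMap ℝ ℂ) q).totalDegree := by
          rw [totalDegree_mul_of_isDomain hP hq0]
          exact Nat.le_add_right _ _
      _ = (f * map (starRingEnd ℂ) f - C (algebraMap ℝ ℂ r)).totalDegree := by rw [hq2]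
      _ ≤ (f * map (starRingEnd ℂ) f).totalDegree := totalDegree_sub_C_le _ _
      _ ≤ f.totalDegree + (map (starRingEnd ℂ) f).totalDegree := totalDegree_mul _ _
      _ ≤ 2 * f.totalDegree := by
          have : (map (starRingEnd ℂ) f).totalDegree ≤ f.totalDegree :=
            Finset.sup_mono (support_map_subset _ _)
          lia
end

section
/- Let α ∈ ℝ[x,y] and suppose there exists u ∈ ℂ[x,y] such that the image of α in ℂ[x,y] together with u generate ℂ[x,y] as a ℂ-algebra. Then there exists β ∈ ℝ[x,y] such that α and β generate ℝ[x,y] as an ℝ-algebra. Moreover, if u lies in ℝ[x,y] (all coefficients of u are real), then one may take β = u. -/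
open MvPolynomial

/-!
Write `σ` for coefficientwise conjugation on `ℂ[x,y]`. Since `α` is real, `σ u` is again a
generator of `ℂ[x,y]` over `ℂ[α]`. As `ℂ[x,y]` is a polynomial ring in `u` over the polynomial ring
`ℂ[α]` (a surjective endomorphism of a Noetherian ring is injective,
`ringHom_injective_of_surjective`), comparing degrees of the
mutually inverse substitutions forces `σ u = c u + s` with `c ∈ ℂ` and `s ∈ ℂ[α]`
(`eq_smul_add_of_adjoin_eq_top`). Writing `u = a + i b` with `a`, `b` real gives
`2 a = (1 + c) u + s`, so `a` generates together with `α` unless `c = -1`, and in that case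
`2 i b = 2 u - s`, so `b` does. Generation over `ℂ` by real polynomials descends to generation over
`ℝ` by taking real parts (`adjoin_real_eq_top`).
-/

/-- Substitution of `w` for the outer variable and of `α` for the inner one in `k[t][X]`. -/
noncomputable def substHom {k : Type*} [Field k] (α w : MvPolynomial (Fin 2) k) :
    Polynomial (MvPolynomial (Fin 1) k) →+* MvPolynomial (Fin 2) k :=
  Polynomial.eval₂RingHom (aeval (fun _ : Fin 1 => α) :
    MvPolynomial (Fin 1) k →ₐ[k] MvPolynomial (Fin 2) k).toRingHom w

lemma substHom_X {k : Type*} [Field k] (α w : MvPolynomial (Fin 2) k) :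
    substHom α w Polynomial.X = w := by
  simp [substHom]

lemma substHom_C {k : Type*} [Field k] (α w : MvPolynomial (Fin 2) k)
    (r : MvPolynomial (Fin 1) k) :
    substHom α w (Polynomial.C r) = aeval (fun _ : Fin 1 => α) r := by
  simp [substHom]

lemma substHom_comp {k : Type*} [Field k] (α w : MvPolynomial (Fin 2) k)
    (r q : Polynomial (MvPolynomial (Fin 1) k)) :
    substHom α w (r.comp q) = substHom α (substHom α w q) r := by
  simp [substHom, Polynomial.eval₂_comp]

lemma substHom_finSuccEquiv {k : Type*} [Field k] (α w : MvPolynomial (Fin 2) k)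
    (f : MvPolynomial (Fin 2) k) :
    substHom α w (finSuccEquiv k 1 f) = aeval ![w, α] f := by
  induction f using MvPolynomial.induction_on with
  | C a => simp [substHom, finSuccEquiv_apply]
  | add p q hp hq => simp only [map_add, hp, hq]
  | mul_X p i hp =>
    simp only [map_mul, hp]
    congr 1
    fin_cases i
    · simp [finSuccEquiv_X_zero, substHom]
    · have : finSuccEquiv k 1 (X 1) = Polynomial.C (X 0) := finSuccEquiv_X_succ (j := 0)
      simp [this, substHom]

lemma exists_aeval_of_mem_adjoin {k : Type*} [Field k] {α w f : MvPolynomial (Fin 2) k}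
    (hf : f ∈ Algebra.adjoin k {α, w}) : ∃ g : MvPolynomial (Fin 2) k, aeval ![w, α] g = f := by
  have : ({α, w} : Set (MvPolynomial (Fin 2) k)) = Set.range ![w, α] := by
    simp [Set.pair_comm]
  rw [this, Algebra.adjoin_range_eq_range_aeval] at hf
  exact hf

/-- The kernels of the iterates of `f` stabilize, say at `n`; if `f x = 0` and `x = fⁿ y`, then
`y` lies in the kernel of `fⁿ⁺¹`, hence in that of `fⁿ`. -/
lemma ringHom_injective_of_surjective {A : Type*} [CommRing A] [IsNoetherianRing A]
    (f : A →+* A) (hf : Function.Surjective f) : Function.Injective f := by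
  have hmono : Monotone fun n : ℕ => RingHom.ker (f ^ n) := by
    refine monotone_nat_of_le_succ fun n x hx => ?_
    simp only [RingHom.mem_ker] at hx ⊢
    rw [pow_succ', RingHom.mul_def, RingHom.comp_apply, hx, map_zero]
  obtain ⟨n, hn⟩ := monotone_stabilizes_iff_noetherian.2 ‹IsNoetherianRing A› ⟨_, hmono⟩
  rw [injective_iff_map_eq_zero]
  intro x hx
  obtain ⟨y, rfl⟩ : ∃ y, (f ^ n) y = x := by
    rw [RingHom.coe_pow]
    exact hf.iterate n x
  have hy : y ∈ RingHom.ker (f ^ (n + 1)) := by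
    rw [RingHom.mem_ker, pow_succ', RingHom.mul_def, RingHom.comp_apply, hx]
  have hker : RingHom.ker (f ^ n) = RingHom.ker (f ^ (n + 1)) := hn (n + 1) n.le_succ
  rwa [← hker] at hy

/-- Two generators of `k[x,y]` over `k[α]` differ by an affine substitution: if `q`, `r` are
one-variable polynomials over `k[α]` with `v = q(u)` and `u = r(v)`, then `r ∘ q = X`, so `q` has
degree one and its leading coefficient is a unit of `k[α]`, that is, a nonzero constant. -/
lemma eq_smul_add_of_adjoin_eq_top {k : Type*} [Field k] {α u v : MvPolynomial (Fin 2) k}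
    (h : Algebra.adjoin k {α, u} = ⊤) (hu : u ∈ Algebra.adjoin k {α, v}) :
    ∃ c : k, ∃ s ∈ Algebra.adjoin k {α}, v = C c * u + s := by
  have hsurj : Function.Surjective (aeval ![u, α] : MvPolynomial (Fin 2) k →ₐ[k] _) :=
    fun f => exists_aeval_of_mem_adjoin (h ▸ Algebra.mem_top)
  have hinj : Function.Injective (aeval ![u, α] : MvPolynomial (Fin 2) k →ₐ[k] _) :=
    ringHom_injective_of_surjective
      (aeval ![u, α] : MvPolynomial (Fin 2) k →ₐ[k] MvPolynomial (Fin 2) k).toRingHom hsurj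
  have hinj' : Function.Injective (substHom α u) := by
    intro f g hfg
    obtain ⟨f, rfl⟩ := (finSuccEquiv k 1).surjective f
    obtain ⟨g, rfl⟩ := (finSuccEquiv k 1).surjective g
    rw [substHom_finSuccEquiv, substHom_finSuccEquiv] at hfg
    rw [hinj hfg]
  obtain ⟨q, hq⟩ : ∃ q, substHom α u q = v := by
    obtain ⟨g, hg⟩ := hsurj v
    exact ⟨_, (substHom_finSuccEquiv α u g).trans hg⟩
  obtain ⟨r, hr⟩ : ∃ r, substHom α v r = u := by
    obtain ⟨g, hg⟩ := exists_aeval_of_mem_adjoin hu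
    exact ⟨_, (substHom_finSuccEquiv α v g).trans hg⟩
  have hcomp : r.comp q = Polynomial.X := by
    apply hinj'
    rw [substHom_comp, hq, hr, substHom_X]
  have hdeg : r.natDegree * q.natDegree = 1 := by
    rw [← Polynomial.natDegree_comp, hcomp, Polynomial.natDegree_X]
  have hq1 : q.natDegree = 1 := Nat.eq_one_of_mul_eq_one_left hdeg
  have hr1 : r.natDegree = 1 := Nat.eq_one_of_mul_eq_one_right hdeg
  have hlead : r.leadingCoeff * q.leadingCoeff = 1 := by
    have := Polynomial.leadingCoeff_comp (p := r) (q := q) (by omega)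
    rw [hcomp, Polynomial.leadingCoeff_X, hr1, pow_one] at this
    exact this.symm
  have hunit : IsUnit (q.coeff 1) := by
    rw [Polynomial.leadingCoeff, Polynomial.leadingCoeff, hq1] at hlead
    exact IsUnit.of_mul_eq_one_right _ hlead
  obtain ⟨c, -, hc⟩ := MvPolynomial.isUnit_iff_eq_C_of_isReduced.1 hunit
  refine ⟨c, aeval (fun _ : Fin 1 => α) (q.coeff 0), ?_, ?_⟩
  · have : ({α} : Set (MvPolynomial (Fin 2) k)) = Set.range (fun _ : Fin 1 => α) := by simp
    rw [this, Algebra.adjoin_range_eq_range_aeval]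
    exact ⟨_, rfl⟩
  · rw [← hq]
    conv_lhs => rw [Polynomial.eq_X_add_C_of_natDegree_le_one hq1.le]
    rw [map_add, map_mul, substHom_C, substHom_C, substHom_X, hc]
    simp [algebraMap_eq]

lemma C_I_mul_C_I : (C Complex.I * C Complex.I : MvPolynomial (Fin 2) ℂ) = -1 := by
  rw [← C_mul, Complex.I_mul_I, C_neg, C_1]

/-- If the generators of a complex algebra are real and lie in `B`, every element of it has its real
and imaginary parts in `B`. -/
lemma exists_re_im_of_mem_adjoin {s : Set (MvPolynomial (Fin 2) ℂ)}
    {B : Subalgebra ℝ (MvPolynomial (Fin 2) ℝ)}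
    (hs : ∀ f ∈ s, ∃ a ∈ B, f = map (algebraMap ℝ ℂ) a) {f : MvPolynomial (Fin 2) ℂ}
    (hf : f ∈ Algebra.adjoin ℂ s) :
    ∃ a ∈ B, ∃ b ∈ B, f = map (algebraMap ℝ ℂ) a + C Complex.I * map (algebraMap ℝ ℂ) b := by
  induction hf using Algebra.adjoin_induction with
  | mem f hf =>
    obtain ⟨a, ha, rfl⟩ := hs f hf
    exact ⟨a, ha, 0, zero_mem _, by simp⟩
  | algebraMap z =>
    refine ⟨C z.re, B.algebraMap_mem _, C z.im, B.algebraMap_mem _, ?_⟩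
    rw [algebraMap_eq, map_C, map_C, ← C_mul, ← C_add]
    congr 1
    rw [mul_comm]
    exact (Complex.re_add_im z).symm
  | add f g _ _ hf hg =>
    obtain ⟨a, ha, b, hb, rfl⟩ := hf
    obtain ⟨a', ha', b', hb', rfl⟩ := hg
    exact ⟨a + a', add_mem ha ha', b + b', add_mem hb hb', by simp only [map_add]; ring⟩
  | mul f g _ _ hf hg =>
    obtain ⟨a, ha, b, hb, rfl⟩ := hf
    obtain ⟨a', ha', b', hb', rfl⟩ := hg
    refine ⟨a * a' - b * b', sub_mem (mul_mem ha ha') (mul_mem hb hb'),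
      a * b' + b * a', add_mem (mul_mem ha hb') (mul_mem hb ha'), ?_⟩
    simp only [map_add, map_sub, map_mul]
    linear_combination (map (algebraMap ℝ ℂ) b * map (algebraMap ℝ ℂ) b') * C_I_mul_C_I

/-- Descent of generation from `ℂ` to `ℝ`. -/
lemma adjoin_real_eq_top {α β : MvPolynomial (Fin 2) ℝ}
    (h : Algebra.adjoin ℂ {map (algebraMap ℝ ℂ) α, map (algebraMap ℝ ℂ) β} = ⊤) :
    Algebra.adjoin ℝ {α, β} = ⊤ := by
  rw [eq_top_iff]
  intro f _
  obtain ⟨a, ha, b, -, hab⟩ := exists_re_im_of_mem_adjoin (B := Algebra.adjoin ℝ {α, β})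
    (s := {map (algebraMap ℝ ℂ) α, map (algebraMap ℝ ℂ) β})
    (by
      rintro g (rfl | rfl)
      · exact ⟨α, Algebra.subset_adjoin (by simp), rfl⟩
      · exact ⟨β, Algebra.subset_adjoin (by simp), rfl⟩)
    (f := map (algebraMap ℝ ℂ) f) (h ▸ Algebra.mem_top)
  have : f = a := by
    ext m
    have := congrArg (fun g => (coeff m g).re) hab
    simpa [coeff_map] using this
  exact this ▸ ha

lemma map_star_map_real (a : MvPolynomial (Fin 2) ℝ) :
    map (starRingEnd ℂ) (map (algebraMap ℝ ℂ) a) = map (algebraMap ℝ ℂ) a := by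
  ext m
  simp [coeff_map]

lemma map_star_mem_adjoin {α : MvPolynomial (Fin 2) ℝ} {u f : MvPolynomial (Fin 2) ℂ}
    (hf : f ∈ Algebra.adjoin ℂ {map (algebraMap ℝ ℂ) α, u}) :
    map (starRingEnd ℂ) f ∈
      Algebra.adjoin ℂ {map (algebraMap ℝ ℂ) α, map (starRingEnd ℂ) u} := by
  induction hf using Algebra.adjoin_induction with
  | mem f hf =>
    rcases hf with rfl | rfl
    · rw [map_star_map_real]
      exact Algebra.subset_adjoin (by simp)
    · exact Algebra.subset_adjoin (by simp)
  | algebraMap z =>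
    rw [algebraMap_eq, map_C]
    exact Subalgebra.algebraMap_mem _ _
  | add f g _ _ hf hg => rw [map_add]; exact add_mem hf hg
  | mul f g _ _ hf hg => rw [map_mul]; exact mul_mem hf hg

/-- The generator `u` may be replaced by `w` because `u = d⁻¹ (e w + s) ∈ k[α, w]`. -/
lemma adjoin_eq_top_of_affine {k : Type*} [Field k] {α u w s : MvPolynomial (Fin 2) k}
    (h : Algebra.adjoin k {α, u} = ⊤) {d e : k} (hd : d ≠ 0) (hs : s ∈ Algebra.adjoin k {α})
    (hw : C d * u = C e * w + s) : Algebra.adjoin k {α, w} = ⊤ := by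
  have hs' : s ∈ Algebra.adjoin k {α, w} := Algebra.adjoin_mono (by simp) hs
  have hC : ∀ z : k, C z ∈ Algebra.adjoin k {α, w} := fun z => Subalgebra.algebraMap_mem _ z
  have hu : u ∈ Algebra.adjoin k {α, w} := by
    have : u = C d⁻¹ * (C e * w + s) := by
      rw [← hw, ← mul_assoc, ← C_mul, inv_mul_cancel₀ hd, C_1, one_mul]
    rw [this]
    exact mul_mem (hC _) (add_mem (mul_mem (hC _) (Algebra.subset_adjoin (by simp))) hs')
  rw [eq_top_iff, ← h, Algebra.adjoin_le_iff]
  rintro f (rfl | rfl)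
  · exact Algebra.subset_adjoin (by simp)
  · exact hu

/-- If `α ∈ ℝ[x,y]` and `ℂ[x,y] = ℂ[α, u]` for some `u`, then `ℝ[x,y] = ℝ[α, β]` for
some `β`; moreover if `u` has real coefficients one may take `β = u`. -/
theorem stmt_12 (α : MvPolynomial (Fin 2) ℝ) (u : MvPolynomial (Fin 2) ℂ)
    (h : Algebra.adjoin ℂ {MvPolynomial.map (algebraMap ℝ ℂ) α, u} = ⊤) :
    (∃ β : MvPolynomial (Fin 2) ℝ, Algebra.adjoin ℝ {α, β} = ⊤) ∧
      ∀ u₀ : MvPolynomial (Fin 2) ℝ, MvPolynomial.map (algebraMap ℝ ℂ) u₀ = u →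
        Algebra.adjoin ℝ {α, u₀} = ⊤ := by
  refine ⟨?_, fun u₀ hu₀ => adjoin_real_eq_top (hu₀ ▸ h)⟩
  obtain ⟨a, -, b, -, hab⟩ := exists_re_im_of_mem_adjoin (B := ⊤) (s := Set.range X)
    (by rintro _ ⟨i, rfl⟩; exact ⟨X i, Algebra.mem_top, by simp⟩)
    (f := u) (by rw [adjoin_range_X]; exact Algebra.mem_top)
  have hconj : map (starRingEnd ℂ) u =
      map (algebraMap ℝ ℂ) a - C Complex.I * map (algebraMap ℝ ℂ) b := by
    rw [hab, map_add, map_mul, map_star_map_real, map_star_map_real, map_C, Complex.conj_I, C_neg]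
    ring
  have hu : u ∈ Algebra.adjoin ℂ {map (algebraMap ℝ ℂ) α, map (starRingEnd ℂ) u} := by
    have := map_star_mem_adjoin (α := α) (u := u) (f := map (starRingEnd ℂ) u)
      (h ▸ Algebra.mem_top)
    rwa [map_map, show (starRingEnd ℂ).comp (starRingEnd ℂ) = RingHom.id ℂ by ext; simp,
      map_id] at this
  obtain ⟨c, s, hs, hcs⟩ := eq_smul_add_of_adjoin_eq_top h hu
  rw [hconj] at hcs
  have h2 : (C 2 : MvPolynomial (Fin 2) ℂ) = 2 := map_ofNat C 2
  by_cases hc : 1 + c = 0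
  · obtain rfl : c = -1 := by linear_combination hc
    refine ⟨b, adjoin_real_eq_top (adjoin_eq_top_of_affine h (d := 2) (e := 2 * Complex.I)
      two_ne_zero hs ?_)⟩
    rw [C_neg, C_1] at hcs
    rw [C_mul, h2]
    linear_combination hab + hcs
  · refine ⟨a, adjoin_real_eq_top (adjoin_eq_top_of_affine h (d := 1 + c) (e := 2) hc
      (neg_mem hs) ?_)⟩
    rw [C_add, C_1, h2]
    linear_combination hab - hcs
end

section
/- Let R_T = ℝ[a,b,x,y]/(a² + b² − 1, x² + y² − (a+2)²) be the coordinate ring of the real torus of revolution T, and let R_S = ℝ[a,b,c,d]/(a² + b² − 1, c² + d² − 1) be the coordinate ring of the real algebraic torus S¹ × S¹. Then R_T and R_S are not isomorphic as ℝ-algebras; in particular, the S¹-bundle T over S¹ is a nontrivial algebraic S¹-bundle. -/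
/-! The two rings are distinguished by their Zariski tangent spaces at complex points.

The surface `T` has a singular complex point `(a, b, x, y) = (-2, √3 i, 0, 0)`: the equation
`x² + y² = (a+2)²` has vanishing differential there, so the tangent space at that point has
dimension three. On the other hand the complexification of `S¹ × S¹` is smooth: at every complex
point neither differential `a da + b db`, `c dc + d dd` vanishes, so the tangent spaces have
dimension at most two.

Tangent vectors at complex points are encoded as `ℝ`-algebra homomorphisms into the
square-zero extension `ℂ ⊕ V` with `V = ℂ³`: such a homomorphism is a complex point together
with a derivation at that point with values in `V`. For `R_T` there is one whose derivation part
spans `V` (`exists_torus_tangent`), while for `R_S` the derivation part is always killed by a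
nonzero linear functional on `V` (`exists_functional_of_product`). -/


open MvPolynomial

/-- A tangent vector, with values in a complex vector space, to the circle at a complex point
has both its components in a common line, since the differential of `a² + b²` does not vanish
on the circle. -/
lemma circle_tangent {V : Type*} [AddCommGroup V] [Module ℂ V] (p q : ℂ) (s t : V)
    (h : p ^ 2 + q ^ 2 = 1) (hd : p • s + q • t = 0) :
    ∃ u : V, (∃ k : ℂ, s = k • u) ∧ ∃ k : ℂ, t = k • u := by
  refine ⟨q • s - p • t, ⟨q, ?_⟩, ⟨-p, ?_⟩⟩
  · calc s = (p ^ 2 + q ^ 2) • s - p • (p • s + q • t) := by rw [h, hd]; simp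
      _ = _ := by module
  · calc t = (p ^ 2 + q ^ 2) • t - q • (p • s + q • t) := by rw [h, hd]; simp
      _ = _ := by module

/-- The components of a point of the circle over a square-zero extension: a complex point of the
circle and a tangent vector there. -/
lemma circle_tsze {V : Type*} [AddCommGroup V] [Module ℂ V] [Module ℂᵐᵒᵖ V] [IsCentralScalar ℂ V]
    (A B : TrivSqZeroExt ℂ V) (h : A ^ 2 + B ^ 2 = 1) :
    A.fst ^ 2 + B.fst ^ 2 = 1 ∧ A.fst • A.snd + B.fst • B.snd = 0 := by
  refine ⟨by simpa using congrArg TrivSqZeroExt.fst h, ?_⟩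
  have h2 := congrArg TrivSqZeroExt.snd h
  simp only [pow_two, TrivSqZeroExt.snd_add, TrivSqZeroExt.snd_mul, TrivSqZeroExt.snd_one,
    op_smul_eq_smul] at h2
  have h3 : (2 : ℂ) • (A.fst • A.snd + B.fst • B.snd) = 0 := by
    rw [← h2]; module
  exact (smul_eq_zero.1 h3).resolve_left two_ne_zero

/-- Every complex tangent space of `S¹ × S¹` has dimension at most two. -/
lemma exists_functional_of_product
    (Ψ : (MvPolynomial (Fin 4) ℝ ⧸
        Ideal.span {(X 0 : MvPolynomial (Fin 4) ℝ) ^ 2 + X 1 ^ 2 - 1,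
          (X 2 : MvPolynomial (Fin 4) ℝ) ^ 2 + X 3 ^ 2 - 1}) →ₐ[ℝ]
      TrivSqZeroExt ℂ (Fin 3 → ℂ)) :
    ∃ l : (Fin 3 → ℂ) →ₗ[ℂ] ℂ, l ≠ 0 ∧ ∀ r, l (Ψ r).snd = 0 := by
  let Φ : MvPolynomial (Fin 4) ℝ →ₐ[ℝ] TrivSqZeroExt ℂ (Fin 3 → ℂ) :=
    Ψ.comp (Ideal.Quotient.mkₐ ℝ _)
  have hΦ : ∀ f ∈ Ideal.span {(X 0 : MvPolynomial (Fin 4) ℝ) ^ 2 + X 1 ^ 2 - 1,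
      (X 2 : MvPolynomial (Fin 4) ℝ) ^ 2 + X 3 ^ 2 - 1}, Φ f = 0 := fun f hf => by
    change Ψ (Ideal.Quotient.mk _ f) = 0
    rw [Ideal.Quotient.eq_zero_iff_mem.2 hf, map_zero]
  have h1 := hΦ _ (Ideal.subset_span (Set.mem_insert _ _))
  have h2 := hΦ _ (Ideal.subset_span (Set.mem_insert_of_mem _ rfl))
  simp only [map_add, map_sub, map_pow, map_one, sub_eq_zero] at h1 h2
  obtain ⟨u, ⟨k0, h0⟩, k1, h1⟩ := (circle_tsze _ _ h1).elim (circle_tangent _ _ _ _)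
  obtain ⟨w, ⟨k2, h2⟩, k3, h3⟩ := (circle_tsze _ _ h2).elim (circle_tangent _ _ _ _)
  -- `u` and `w` span all tangent vectors, and two vectors do not span `ℂ³`.
  have hlt : Submodule.span ℂ {u, w} < ⊤ := by
    refine lt_top_iff_ne_top.2 fun h => ?_
    have hle : (Set.range ![u, w]).finrank ℂ ≤ 2 := by
      simpa using finrank_range_le_card (R := ℂ) ![u, w]
    rw [Set.finrank, Matrix.range_cons_cons_empty, h, finrank_top] at hle
    simp at hle
  obtain ⟨l, hl, hker⟩ := Submodule.exists_le_ker_of_lt_top _ hlt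
  have hu : l u = 0 := hker (Submodule.subset_span (by simp))
  have hw : l w = 0 := hker (Submodule.subset_span (by simp))
  refine ⟨l, hl, fun r => ?_⟩
  obtain ⟨f, rfl⟩ := Ideal.Quotient.mk_surjective r
  change l (Φ f).snd = 0
  induction f using MvPolynomial.induction_on with
  | C c =>
    rw [← MvPolynomial.algebraMap_eq, AlgHom.commutes, TrivSqZeroExt.algebraMap_eq_inl']
    simp
  | add f g hf hg => simp [hf, hg]
  | mul_X f i hf =>
    have hi : l (Φ (X i)).snd = 0 := by
      fin_cases i
      · simp [h0, hu]
      · simp [h1, hu]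
      · simp [h2, hw]
      · simp [h3, hw]
    simp [TrivSqZeroExt.snd_mul, hf, hi]

/-- The torus of revolution has a complex point whose tangent space has dimension three, namely
the singular point `(-2, √3 i, 0, 0)`. -/
lemma exists_torus_tangent :
    ∃ Ψ : (MvPolynomial (Fin 4) ℝ ⧸
        Ideal.span {(X 0 : MvPolynomial (Fin 4) ℝ) ^ 2 + X 1 ^ 2 - 1,
          (X 2 : MvPolynomial (Fin 4) ℝ) ^ 2 + X 3 ^ 2 - (X 0 + 2) ^ 2}) →ₐ[ℝ]
      TrivSqZeroExt ℂ (Fin 3 → ℂ),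
      ∀ l : (Fin 3 → ℂ) →ₗ[ℂ] ℂ, (∀ r, l (Ψ r).snd = 0) → l = 0 := by
  obtain ⟨z, hz⟩ : ∃ z : ℂ, z ^ 2 = -3 := IsAlgClosed.exists_pow_nat_eq _ (by norm_num)
  -- The point is `(-2, z, 0, 0)`; the tangent vectors `(z, 2, 0, 0)`, `(0, 0, 1, 0)` and
  -- `(0, 0, 0, 1)` are carried by the three coordinates of `ℂ³`.
  let v : Fin 4 → TrivSqZeroExt ℂ (Fin 3 → ℂ) :=
    ![.inl (-2) + .inr (Pi.single 0 z), .inl z + .inr (Pi.single 0 2),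
      .inr (Pi.single 1 1), .inr (Pi.single 2 1)]
  have hv : ∀ f ∈ Ideal.span {(X 0 : MvPolynomial (Fin 4) ℝ) ^ 2 + X 1 ^ 2 - 1,
          (X 2 : MvPolynomial (Fin 4) ℝ) ^ 2 + X 3 ^ 2 - (X 0 + 2) ^ 2},
      MvPolynomial.aeval (R := ℝ) v f = 0 := by
    have h2 : (2 : TrivSqZeroExt ℂ (Fin 3 → ℂ)) = .inl 2 := rfl
    have : Ideal.span {(X 0 : MvPolynomial (Fin 4) ℝ) ^ 2 + X 1 ^ 2 - 1,
          (X 2 : MvPolynomial (Fin 4) ℝ) ^ 2 + X 3 ^ 2 - (X 0 + 2) ^ 2} ≤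
        RingHom.ker (MvPolynomial.aeval (R := ℝ) v) := by
      rw [Ideal.span_le]
      rintro f (rfl | rfl)
      · rw [SetLike.mem_coe, RingHom.mem_ker]
        ext i
        · simp [v]; linear_combination hz
        · fin_cases i <;> simp [v, pow_two, TrivSqZeroExt.snd_mul]
          ring
      · rw [SetLike.mem_coe, RingHom.mem_ker]
        simp only [map_sub, map_add, map_pow, aeval_X, map_ofNat, h2]
        ext i
        · simp [v]
        · fin_cases i <;> simp [v, pow_two]
    exact this
  refine ⟨Ideal.Quotient.liftₐ _ (MvPolynomial.aeval v) hv, fun l hl => ?_⟩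
  have hX (i : Fin 4) : l (v i).snd = 0 := by
    rw [← aeval_X (R := ℝ) v i]
    exact hl (Ideal.Quotient.mk _ (X i))
  have h1 := hX 1
  have h2 := hX 2
  have h3 := hX 3
  simp only [v] at h1 h2 h3
  refine LinearMap.pi_ext' fun i => LinearMap.ext_ring ?_
  fin_cases i
  · have : (Pi.single 0 2 : Fin 3 → ℂ) = (2 : ℂ) • Pi.single 0 1 := by
      rw [← Pi.single_smul]; simp
    simpa [this] using h1
  · simpa using h2
  · simpa using h3

/-- The coordinate ring `R_T = ℝ[a,b,x,y]/(a² + b² − 1, x² + y² − (a+2)²)` of the torus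
of revolution `T` is not `ℝ`-isomorphic to the coordinate ring
`R_S = ℝ[a,b,c,d]/(a² + b² − 1, c² + d² − 1)` of `S¹ × S¹`.
(Variables: `X 0 = a`, `X 1 = b`, `X 2 = x, c`, `X 3 = y, d`.) -/
theorem stmt_17 :
    IsEmpty ((MvPolynomial (Fin 4) ℝ ⧸
        Ideal.span {(X 0 : MvPolynomial (Fin 4) ℝ) ^ 2 + X 1 ^ 2 - 1,
          (X 2 : MvPolynomial (Fin 4) ℝ) ^ 2 + X 3 ^ 2 - (X 0 + 2) ^ 2}) ≃ₐ[ℝ]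
      (MvPolynomial (Fin 4) ℝ ⧸
        Ideal.span {(X 0 : MvPolynomial (Fin 4) ℝ) ^ 2 + X 1 ^ 2 - 1,
          (X 2 : MvPolynomial (Fin 4) ℝ) ^ 2 + X 3 ^ 2 - 1})) := by
  refine ⟨fun e => ?_⟩
  obtain ⟨Ψ, hΨ⟩ := exists_torus_tangent
  obtain ⟨l, hl, h⟩ := exists_functional_of_product (Ψ.comp e.symm.toAlgHom)
  refine hl (hΨ l fun r => ?_)
  simpa using h (e r)
end

section
/- Let R_T = ℝ[a,b,x,y]/(a² + b² − 1, x² + y² − (a+2)²). Then R_T is generated as an ℝ-algebra by the residue classes of b, x and y; moreover R_T is isomorphic as an ℝ-algebra to ℝ[b,x,y]/((x² + y² + b² + 3)² − 16(x² + y²)). In particular, the torus of revolution T admits a polynomial embedding in ℝ³. -/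
/-!
Adding the two relations of `R_T` gives `4a = x² + y² + b² − 5`, so the class of `a` is a
polynomial in the classes of `b`, `x`, `y`, and these generate. Substituting
`a = (x² + y² + b² − 5) / 4` turns `a² + b² − 1` into `f / 16` and `x² + y² − (a + 2)²` into
`−f / 16`, where `f` is the quartic, so the substitution and the inclusion
`ℝ[b,x,y] ⊆ ℝ[a,b,x,y]` both descend to the quotients. They are mutually inverse: both composites
fix `b`, `x`, `y`, and by `four_mul_eq` the composite on `R_T` fixes `a` as well.
-/

open MvPolynomial

/-- The ideal of the torus in `ℝ[a,b,x,y]`. -/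
noncomputable abbrev torusIdeal : Ideal (MvPolynomial (Fin 4) ℝ) :=
  Ideal.span {(X 0 : MvPolynomial (Fin 4) ℝ) ^ 2 + X 1 ^ 2 - 1,
    (X 2 : MvPolynomial (Fin 4) ℝ) ^ 2 + X 3 ^ 2 - (X 0 + 2) ^ 2}

/-- The principal ideal of the quartic torus equation in `ℝ[b,x,y]`. -/
noncomputable abbrev quarticIdeal : Ideal (MvPolynomial (Fin 3) ℝ) :=
  Ideal.span {((X 1 : MvPolynomial (Fin 3) ℝ) ^ 2 + X 2 ^ 2 + X 0 ^ 2 + 3) ^ 2 -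
    16 * ((X 1 : MvPolynomial (Fin 3) ℝ) ^ 2 + X 2 ^ 2)}

/-- The class of a variable `a`, `b`, `x`, `y` in `R_T`. -/
noncomputable abbrev torusVar (i : Fin 4) : MvPolynomial (Fin 4) ℝ ⧸ torusIdeal :=
  Ideal.Quotient.mk torusIdeal (X i)

/-- The class of a variable `b`, `x`, `y` modulo the quartic. -/
noncomputable abbrev quarticVar (i : Fin 3) : MvPolynomial (Fin 3) ℝ ⧸ quarticIdeal :=
  Ideal.Quotient.mk quarticIdeal (X i)

lemma torusVar_rel₁ : torusVar 0 ^ 2 + torusVar 1 ^ 2 - 1 = 0 := by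
  have h := Ideal.Quotient.eq_zero_iff_mem.mpr
    (Ideal.subset_span (Set.mem_insert _ _) : _ ∈ torusIdeal)
  simpa only [map_sub, map_add, map_pow, map_one] using h

lemma torusVar_rel₂ : torusVar 2 ^ 2 + torusVar 3 ^ 2 - (torusVar 0 + 2) ^ 2 = 0 := by
  have h := Ideal.Quotient.eq_zero_iff_mem.mpr
    (Ideal.subset_span (Set.mem_insert_of_mem _ rfl) : _ ∈ torusIdeal)
  simpa only [map_sub, map_add, map_pow, map_ofNat] using h

lemma quarticVar_rel : (quarticVar 1 ^ 2 + quarticVar 2 ^ 2 + quarticVar 0 ^ 2 + 3) ^ 2 -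
    16 * (quarticVar 1 ^ 2 + quarticVar 2 ^ 2) = 0 := by
  have h := Ideal.Quotient.eq_zero_iff_mem.mpr
    (Ideal.subset_span (Set.mem_singleton _) : _ ∈ quarticIdeal)
  simpa only [map_sub, map_add, map_mul, map_pow, map_ofNat] using h

lemma four_mul_algebraMap (B : Type*) [CommRing B] [Algebra ℝ B] :
    4 * algebraMap ℝ B (1 / 4) = 1 := by
  rw [← map_ofNat (algebraMap ℝ B) 4, ← map_mul]
  norm_num

/-- The elimination of `a`: in `R_T` one has `4a = x² + y² + b² − 5`. -/
lemma four_mul_eq :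
    4 * torusVar 0 = torusVar 2 ^ 2 + torusVar 3 ^ 2 + torusVar 1 ^ 2 - 5 := by
  linear_combination -torusVar_rel₁ - torusVar_rel₂

lemma torusVar_zero_eq : torusVar 0 = algebraMap ℝ _ (1 / 4) *
    (torusVar 2 ^ 2 + torusVar 3 ^ 2 + torusVar 1 ^ 2 - 5) := by
  linear_combination (-torusVar 0) * four_mul_algebraMap (MvPolynomial (Fin 4) ℝ ⧸ torusIdeal) +
    algebraMap ℝ (MvPolynomial (Fin 4) ℝ ⧸ torusIdeal) (1 / 4) * four_mul_eq

/-- The image of `a` modulo the quartic, namely `(x² + y² + b² − 5) / 4`. -/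
noncomputable def quarticA : MvPolynomial (Fin 3) ℝ ⧸ quarticIdeal :=
  algebraMap ℝ _ (1 / 4) * (quarticVar 1 ^ 2 + quarticVar 2 ^ 2 + quarticVar 0 ^ 2 - 5)

lemma quarticA_rel₁ : quarticA ^ 2 + quarticVar 0 ^ 2 - 1 = 0 := by
  have hq := four_mul_algebraMap (MvPolynomial (Fin 3) ℝ ⧸ quarticIdeal)
  have hf := quarticVar_rel
  unfold quarticA
  set q := algebraMap ℝ (MvPolynomial (Fin 3) ℝ ⧸ quarticIdeal) (1 / 4)
  -- `16 (a² + b² − 1) = f`, and `q = 1/4` is used to divide by `16`.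
  linear_combination q ^ 2 * hf - (quarticVar 0 ^ 2 - 1) * (4 * q + 1) * hq

lemma quarticA_rel₂ : quarticVar 1 ^ 2 + quarticVar 2 ^ 2 - (quarticA + 2) ^ 2 = 0 := by
  have hq := four_mul_algebraMap (MvPolynomial (Fin 3) ℝ ⧸ quarticIdeal)
  have h4 : 4 * quarticA = quarticVar 1 ^ 2 + quarticVar 2 ^ 2 + quarticVar 0 ^ 2 - 5 := by
    unfold quarticA
    linear_combination (quarticVar 1 ^ 2 + quarticVar 2 ^ 2 + quarticVar 0 ^ 2 - 5) * hq
  linear_combination -quarticA_rel₁ - h4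

/-- The substitution `a ↦ (x² + y² + b² − 5) / 4`, from `R_T` to the quartic's quotient. -/
noncomputable def toQuartic :
    (MvPolynomial (Fin 4) ℝ ⧸ torusIdeal) →ₐ[ℝ] (MvPolynomial (Fin 3) ℝ ⧸ quarticIdeal) :=
  Ideal.Quotient.liftₐ torusIdeal
    (aeval ![quarticA, quarticVar 0, quarticVar 1, quarticVar 2]) <| by
      change torusIdeal ≤ RingHom.ker _
      rw [Ideal.span_le]
      rintro p (rfl | rfl)
      · simpa [RingHom.mem_ker] using quarticA_rel₁
      · simpa [RingHom.mem_ker] using quarticA_rel₂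

/-- The map induced by the inclusion `ℝ[b,x,y] ⊆ ℝ[a,b,x,y]`. -/
noncomputable def ofQuartic :
    (MvPolynomial (Fin 3) ℝ ⧸ quarticIdeal) →ₐ[ℝ] (MvPolynomial (Fin 4) ℝ ⧸ torusIdeal) :=
  Ideal.Quotient.liftₐ quarticIdeal
    (aeval ![torusVar 1, torusVar 2, torusVar 3]) <| by
      change quarticIdeal ≤ RingHom.ker _
      rw [Ideal.span_le]
      rintro p rfl
      have h : (torusVar 2 ^ 2 + torusVar 3 ^ 2 + torusVar 1 ^ 2 + 3) ^ 2 -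
          16 * (torusVar 2 ^ 2 + torusVar 3 ^ 2) = 0 := by
        -- With `s = x² + y² + b²`, the quartic is `(s − 5)² + 16 (b² − 1)`, and `s − 5 = 4a`.
        linear_combination 16 * torusVar_rel₁ - (torusVar 2 ^ 2 + torusVar 3 ^ 2 +
          torusVar 1 ^ 2 - 5 + 4 * torusVar 0) * four_mul_eq
      simpa [RingHom.mem_ker] using h

lemma toQuartic_var (i : Fin 4) :
    toQuartic (torusVar i) = ![quarticA, quarticVar 0, quarticVar 1, quarticVar 2] i :=
  aeval_X _ i

lemma ofQuartic_var (i : Fin 3) :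
    ofQuartic (quarticVar i) = ![torusVar 1, torusVar 2, torusVar 3] i :=
  aeval_X _ i

lemma ofQuartic_quarticA : ofQuartic quarticA = torusVar 0 := by
  rw [torusVar_zero_eq, quarticA]
  simp only [map_mul, map_sub, map_add, map_pow, map_ofNat, AlgHom.commutes, ofQuartic_var]
  rfl

/-- `R_T` is the quotient of `ℝ[b,x,y]` by the quartic. -/
noncomputable def torusEquiv :
    (MvPolynomial (Fin 4) ℝ ⧸ torusIdeal) ≃ₐ[ℝ] (MvPolynomial (Fin 3) ℝ ⧸ quarticIdeal) :=
  AlgEquiv.ofAlgHom toQuartic ofQuartic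
    (by
      apply Ideal.Quotient.algHom_ext
      apply MvPolynomial.algHom_ext
      intro i
      change toQuartic (ofQuartic (quarticVar i)) = quarticVar i
      rw [ofQuartic_var]
      fin_cases i
      exacts [toQuartic_var 1, toQuartic_var 2, toQuartic_var 3])
    (by
      apply Ideal.Quotient.algHom_ext
      apply MvPolynomial.algHom_ext
      intro i
      change ofQuartic (toQuartic (torusVar i)) = torusVar i
      rw [toQuartic_var]
      fin_cases i
      exacts [ofQuartic_quarticA, ofQuartic_var 0, ofQuartic_var 1, ofQuartic_var 2])

lemma adjoin_torusVar : Algebra.adjoin ℝ {torusVar 1, torusVar 2, torusVar 3} = ⊤ := by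
  set S := Algebra.adjoin ℝ {torusVar 1, torusVar 2, torusVar 3}
  have h1 : torusVar 1 ∈ S := Algebra.subset_adjoin (by simp)
  have h2 : torusVar 2 ∈ S := Algebra.subset_adjoin (by simp)
  have h3 : torusVar 3 ∈ S := Algebra.subset_adjoin (by simp)
  have h0 : torusVar 0 ∈ S := by
    rw [torusVar_zero_eq]
    exact S.mul_mem (S.algebraMap_mem _) (S.sub_mem (S.add_mem (S.add_mem (S.pow_mem h2 2)
      (S.pow_mem h3 2)) (S.pow_mem h1 2)) (ofNat_mem S 5))
  rw [eq_top_iff]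
  rintro z -
  obtain ⟨p, rfl⟩ := Ideal.Quotient.mk_surjective z
  induction p using MvPolynomial.induction_on with
  | C r => exact S.algebraMap_mem r
  | add p q hp hq => rw [map_add]; exact S.add_mem hp hq
  | mul_X p i hp =>
    rw [map_mul]
    refine S.mul_mem hp ?_
    fin_cases i
    exacts [h0, h1, h2, h3]

/-- The coordinate ring `R_T = ℝ[a,b,x,y]/(a² + b² − 1, x² + y² − (a+2)²)` of the torus
of revolution is generated as an `ℝ`-algebra by the residues of `b`, `x`, `y`, and is
`ℝ`-isomorphic to `ℝ[b,x,y]/((x² + y² + b² + 3)² − 16(x² + y²))`; so `T` admits a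
polynomial embedding in `ℝ³`.
(In `Fin 4`: `X 0 = a`, `X 1 = b`, `X 2 = x`, `X 3 = y`; in `Fin 3`: `X 0 = b`,
`X 1 = x`, `X 2 = y`.) -/
theorem stmt_18 :
    Algebra.adjoin ℝ
      {Ideal.Quotient.mk (Ideal.span {(X 0 : MvPolynomial (Fin 4) ℝ) ^ 2 + X 1 ^ 2 - 1,
          (X 2 : MvPolynomial (Fin 4) ℝ) ^ 2 + X 3 ^ 2 - (X 0 + 2) ^ 2}) (X 1),
        Ideal.Quotient.mk (Ideal.span {(X 0 : MvPolynomial (Fin 4) ℝ) ^ 2 + X 1 ^ 2 - 1,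
          (X 2 : MvPolynomial (Fin 4) ℝ) ^ 2 + X 3 ^ 2 - (X 0 + 2) ^ 2}) (X 2),
        Ideal.Quotient.mk (Ideal.span {(X 0 : MvPolynomial (Fin 4) ℝ) ^ 2 + X 1 ^ 2 - 1,
          (X 2 : MvPolynomial (Fin 4) ℝ) ^ 2 + X 3 ^ 2 - (X 0 + 2) ^ 2}) (X 3)} = ⊤ ∧
    Nonempty ((MvPolynomial (Fin 4) ℝ ⧸
        Ideal.span {(X 0 : MvPolynomial (Fin 4) ℝ) ^ 2 + X 1 ^ 2 - 1,
          (X 2 : MvPolynomial (Fin 4) ℝ) ^ 2 + X 3 ^ 2 - (X 0 + 2) ^ 2}) ≃ₐ[ℝ]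
      (MvPolynomial (Fin 3) ℝ ⧸
        Ideal.span {((X 1 : MvPolynomial (Fin 3) ℝ) ^ 2 + X 2 ^ 2 + X 0 ^ 2 + 3) ^ 2 -
          16 * ((X 1 : MvPolynomial (Fin 3) ℝ) ^ 2 + X 2 ^ 2)})) :=
  ⟨adjoin_torusVar, ⟨torusEquiv⟩⟩
end

section
/- Let B_T = ℂ[a,b,u,v]/(a² + b² − 1, u·v − (a+2)²). Then every unit of B_T lies in the ℂ-subalgebra of B_T generated by the residue classes of a and b; consequently the ℂ-subalgebra of B_T generated by all units of B_T equals the image of ℂ[a,b] in B_T. -/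
open MvPolynomial

/-!
Write `B` for the quotient ring, with residues `a, b, u, v`, and let `A = ℂ[t, t⁻¹]`, which is
`ℂ[a,b]/(a² + b² − 1)` via `t = a + ib`, `t⁻¹ = a − ib`. There are two ring maps, `ofBase : A → B`
sending `t` to `a + ib`, and `toLaurent : B → A[T;T⁻¹]` sending `u` to `T` and `v` to
`(a + 2)² T⁻¹`, and `toLaurent ∘ ofBase` is the inclusion of constants.

Every element of `B` is an `A`-linear combination of `1`, the positive powers of `u` and the
positive powers of `v` (`exists_expand`), and `toLaurent` multiplies the coefficient in degree `n`
by a power of `(a + 2)² ≠ 0` (`coeff_toLaurent_expand`). Since `A` is a domain, units of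
`A[T;T⁻¹]` are monomials (`exists_eq_single_of_isUnit`), so a unit of `B` is homogeneous:
`w = c uⁿ`, `w = c vⁿ` or `w = c`, with `c` in the image of `A`.
The first two are impossible for `n > 0`, because `u` and `v` vanish at the point
`(-2, i√3, 0, 0)` (`point`). Hence `w` lies in the image of `A`, which is the subalgebra generated
by `a` and `b`.

Conversely `a` and `b` are linear combinations of the units `a ± ib`.
-/

namespace TorusUnits

/-! ### Units of Laurent polynomial rings -/

/-- Over a domain, a unit of the Laurent polynomial ring is a monomial. -/
lemma exists_eq_single_of_isUnit {A : Type*} [CommRing A] [IsDomain A] {f : LaurentPolynomial A}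
    (hf : IsUnit f) : ∃ (n : ℤ) (r : A), f = .single n r := by
  obtain ⟨g, hfg⟩ := hf.exists_right_inv
  obtain ⟨m, p, hp⟩ := f.exists_T_pow
  obtain ⟨k, q, hq⟩ := g.exists_T_pow
  -- Clearing denominators turns `f` into a polynomial divisor of the prime power `X ^ (m + k)`.
  have hpq : p * q = Polynomial.X ^ (m + k) := by
    apply Polynomial.toLaurent_injective
    rw [map_mul, hp, hq, Polynomial.toLaurent_X_pow, Nat.cast_add, LaurentPolynomial.T_add]
    linear_combination (LaurentPolynomial.T (m : ℤ) * LaurentPolynomial.T (k : ℤ)) * hfg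
  obtain ⟨i, -, hi⟩ := (dvd_prime_pow Polynomial.prime_X _).1 ⟨q, hpq.symm⟩
  obtain ⟨c, hc⟩ := hi.symm
  obtain ⟨r, -, hr⟩ := Polynomial.isUnit_iff.1 c.isUnit
  refine ⟨i - m, r, ?_⟩
  have : f = Polynomial.toLaurent p * LaurentPolynomial.T (-(m : ℤ)) := by
    rw [hp, LaurentPolynomial.mul_T_assoc]; simp
  rw [this, ← hc, ← hr, map_mul, Polynomial.toLaurent_X_pow, Polynomial.toLaurent_C,
    LaurentPolynomial.single_eq_C_mul_T, LaurentPolynomial.T_sub]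
  ring

/-! ### The ring and its base -/

/-- The ideal defining the complexified torus; the variables are `a, b, u, v`. -/
noncomputable abbrev J : Ideal (MvPolynomial (Fin 4) ℂ) :=
  Ideal.span {(X 0 : MvPolynomial (Fin 4) ℂ) ^ 2 + X 1 ^ 2 - 1,
    (X 2 : MvPolynomial (Fin 4) ℂ) * X 3 - (X 0 + 2) ^ 2}

/-- The ring `B_T`. -/
abbrev B : Type := MvPolynomial (Fin 4) ℂ ⧸ J

/-- The residue class of the `i`-th variable. -/
noncomputable abbrev x (i : Fin 4) : B := Ideal.Quotient.mk J (X i)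

/-- The base ring `ℂ[t, t⁻¹]`, a model of `ℂ[a,b]/(a² + b² − 1)`. -/
abbrev A : Type := LaurentPolynomial ℂ

lemma circle : x 0 ^ 2 + x 1 ^ 2 - 1 = 0 :=
  Ideal.Quotient.eq_zero_iff_mem.2 (Ideal.subset_span (Set.mem_insert _ _))

lemma uv : x 2 * x 3 - (x 0 + 2) ^ 2 = 0 :=
  Ideal.Quotient.eq_zero_iff_mem.2
    (Ideal.subset_span (Set.mem_insert_of_mem _ (Set.mem_singleton _)))

/-- The constant `i` of `B`. -/
noncomputable abbrev im : B := algebraMap ℂ B Complex.I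

lemma im_sq : im ^ 2 = -1 := by rw [← map_pow, Complex.I_sq, map_neg, map_one]

/-- The unit `a + ib` of `B`, with inverse `a − ib`. -/
noncomputable def t : Bˣ where
  val := x 0 + im * x 1
  inv := x 0 - im * x 1
  val_inv := by linear_combination circle - x 1 ^ 2 * im_sq
  inv_val := by linear_combination circle - x 1 ^ 2 * im_sq

/-- The ring map `A → B` sending `t` to `a + ib`. -/
noncomputable def ofBase : A →+* B := LaurentPolynomial.eval₂ (algebraMap ℂ B) t

/-- The element `a = (t + t⁻¹)/2` of `A`. -/
noncomputable def α : A :=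
  LaurentPolynomial.C (1 / 2) * (LaurentPolynomial.T 1 + LaurentPolynomial.T (-1))

/-- The element `b = (t − t⁻¹)/(2i)` of `A`. -/
noncomputable def β : A :=
  LaurentPolynomial.C (-Complex.I / 2) * (LaurentPolynomial.T 1 - LaurentPolynomial.T (-1))

lemma half : algebraMap ℂ B (1 / 2) * 2 = 1 := by
  have : (2 : B) = algebraMap ℂ B 2 := (map_ofNat _ 2).symm
  rw [this, ← map_mul]; norm_num

lemma ofBase_α : ofBase α = x 0 := by
  simp only [ofBase, α, map_mul, map_add, LaurentPolynomial.eval₂_C, LaurentPolynomial.eval₂_T,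
    zpow_one, zpow_neg]
  change _ * ((x 0 + im * x 1) + (x 0 - im * x 1)) = _
  linear_combination x 0 * half

lemma ofBase_β : ofBase β = x 1 := by
  have h : algebraMap ℂ B (-Complex.I / 2) = - im * algebraMap ℂ B (1 / 2) := by
    rw [← map_neg, ← map_mul]; ring_nf
  simp only [ofBase, β, map_mul, map_sub, LaurentPolynomial.eval₂_C, LaurentPolynomial.eval₂_T,
    zpow_one, zpow_neg, h]
  change _ * ((x 0 + im * x 1) - (x 0 - im * x 1)) = _
  linear_combination (- im ^ 2 * x 1) * half - x 1 * im_sq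

lemma αβ : α ^ 2 + β ^ 2 = 1 := by
  have hT : (LaurentPolynomial.T 1 : A) * LaurentPolynomial.T (-1) = 1 := by
    rw [← LaurentPolynomial.T_add]; simp
  have h1 : (LaurentPolynomial.C (1 / 2) : A) ^ 2 * 4 = 1 := by
    have : (4 : A) = LaurentPolynomial.C 4 := (map_ofNat _ 4).symm
    rw [this, ← map_pow, ← map_mul]; norm_num
  have h2 : (LaurentPolynomial.C (-Complex.I / 2) : A) ^ 2 = - LaurentPolynomial.C (1 / 2) ^ 2 := by
    rw [← map_pow, ← map_pow, ← map_neg]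
    congr 1
    rw [div_pow, neg_sq, Complex.I_sq]; norm_num
  rw [α, β, mul_pow, mul_pow, h2]
  linear_combination (4 * LaurentPolynomial.C (1 / 2) ^ 2) * hT + h1

/-- The element `(a + 2)²` of `A`. -/
noncomputable def s : A := (α + 2) ^ 2

/-! ### The map to Laurent polynomials over the base -/

/-- The images of `a, b, u, v` in `A[T;T⁻¹]`. -/
noncomputable def coords : Fin 4 → LaurentPolynomial A :=
  ![LaurentPolynomial.C α, LaurentPolynomial.C β, LaurentPolynomial.T 1,
    LaurentPolynomial.C s * LaurentPolynomial.T (-1)]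

/-- The ring map `B → A[T;T⁻¹]` sending `u` to `T` and `v` to `(a + 2)² T⁻¹`. -/
noncomputable def toLaurent : B →+* LaurentPolynomial A :=
  Ideal.Quotient.lift J
    (eval₂Hom ((LaurentPolynomial.C : A →+* LaurentPolynomial A).comp
      (LaurentPolynomial.C : ℂ →+* A)) coords) <| by
    suffices h : J ≤ RingHom.ker (eval₂Hom ((LaurentPolynomial.C : A →+* LaurentPolynomial A).comp
      (LaurentPolynomial.C : ℂ →+* A)) coords) from fun p hp => h hp
    rw [Ideal.span_le]
    rintro p (rfl | rfl)
    · simp only [SetLike.mem_coe, RingHom.mem_ker, map_sub, map_add, map_pow, map_one,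
        eval₂Hom_X']
      simp only [coords, Matrix.cons_val]
      rw [← map_pow, ← map_pow, ← map_add, αβ, map_one, sub_self]
    · have hT : (LaurentPolynomial.T 1 : LaurentPolynomial A) * LaurentPolynomial.T (-1) = 1 := by
        rw [← LaurentPolynomial.T_add]; simp
      simp only [SetLike.mem_coe, RingHom.mem_ker, map_sub, map_add, map_pow, map_mul, map_ofNat,
        eval₂Hom_X']
      simp only [coords, Matrix.cons_val, s, map_pow, map_add, map_ofNat]
      linear_combination (LaurentPolynomial.C α + 2) ^ 2 * hT

lemma toLaurent_x (i : Fin 4) : toLaurent (x i) = coords i :=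
  (Ideal.Quotient.lift_mk _ _ _).trans (by simp)

lemma toLaurent_algebraMap (r : ℂ) :
    toLaurent (algebraMap ℂ B r) = LaurentPolynomial.C (LaurentPolynomial.C r) := by
  change toLaurent (Ideal.Quotient.mk J (MvPolynomial.C r)) = _
  exact (Ideal.Quotient.lift_mk _ _ _).trans (by simp)

lemma toLaurent_ofBase (r : A) : toLaurent (ofBase r) = LaurentPolynomial.C r := by
  suffices h : toLaurent.comp ofBase = LaurentPolynomial.C from DFunLike.congr_fun h r
  apply IsLocalization.ringHom_ext (Submonoid.powers (Polynomial.X : Polynomial ℂ))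
  apply Polynomial.ringHom_ext
  · intro z
    simp [ofBase, LaurentPolynomial.algebraMap_eq_toLaurent, toLaurent_algebraMap]
  · simp only [RingHom.comp_apply, LaurentPolynomial.algebraMap_eq_toLaurent,
      Polynomial.toLaurent_X, ofBase, LaurentPolynomial.eval₂_T, zpow_one]
    change toLaurent (x 0 + im * x 1) = _
    rw [map_add, map_mul, toLaurent_x, toLaurent_x, toLaurent_algebraMap]
    simp only [coords, Matrix.cons_val]
    rw [← map_mul, ← map_add]
    congr 1
    rw [α, β, ← mul_assoc, ← map_mul]
    have h : Complex.I * (-Complex.I / 2) = 1 / 2 := by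
      linear_combination (-1 / 2) * Complex.I_sq
    have h1 : (LaurentPolynomial.C (1 / 2) : A) * 2 = 1 := by
      have : (2 : A) = LaurentPolynomial.C 2 := (map_ofNat _ 2).symm
      rw [this, ← map_mul]; norm_num
    rw [h]
    linear_combination LaurentPolynomial.T 1 * h1

/-! ### The expansion in powers of `u` and `v` -/

/-- The basis element of degree `n` of `B` over `A`: `uⁿ` if `n ≥ 0` and `v⁻ⁿ` if `n ≤ 0`.
One of the two truncated exponents is always `0`. -/
noncomputable def e (n : ℤ) : B := x 2 ^ n.toNat * x 3 ^ (-n).toNat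

lemma e_zero : e 0 = 1 := by simp [e]

lemma e_natCast (k : ℕ) : e k = x 2 ^ k := by simp [e]

lemma e_neg_natCast (k : ℕ) : e (-k) = x 3 ^ k := by simp [e]

lemma uv' : x 2 * x 3 = ofBase s := by
  rw [s, map_pow, map_add, ofBase_α, map_ofNat]
  exact sub_eq_zero.1 uv

lemma u_mul_e (n : ℤ) : ∃ r : A, e n * x 2 = ofBase r * e (n + 1) := by
  rcases le_or_gt 0 n with h | h
  · lift n to ℕ using h
    refine ⟨1, ?_⟩
    rw [← Nat.cast_succ, e_natCast, e_natCast, map_one, one_mul, pow_succ]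
  · obtain ⟨k, rfl⟩ : ∃ k : ℕ, n = -((k + 1 : ℕ) : ℤ) := ⟨(-n - 1).toNat, by omega⟩
    refine ⟨s, ?_⟩
    have h1 : -((k + 1 : ℕ) : ℤ) + 1 = -(k : ℤ) := by omega
    rw [h1, e_neg_natCast, e_neg_natCast, ← uv']
    ring

lemma v_mul_e (n : ℤ) : ∃ r : A, e n * x 3 = ofBase r * e (n - 1) := by
  rcases le_or_gt n 0 with h | h
  · obtain ⟨k, rfl⟩ : ∃ k : ℕ, n = -(k : ℤ) := ⟨(-n).toNat, by omega⟩
    refine ⟨1, ?_⟩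
    have h1 : -(k : ℤ) - 1 = -((k + 1 : ℕ) : ℤ) := by omega
    rw [h1, e_neg_natCast, e_neg_natCast, map_one, one_mul, pow_succ]
  · obtain ⟨k, rfl⟩ : ∃ k : ℕ, n = ((k + 1 : ℕ) : ℤ) := ⟨(n - 1).toNat, by omega⟩
    refine ⟨s, ?_⟩
    have h1 : ((k + 1 : ℕ) : ℤ) - 1 = (k : ℤ) := by omega
    rw [h1, e_natCast, e_natCast, ← uv']
    ring

/-- The element `∑ cₙ e n` of `B` with coefficients `c`. -/
noncomputable def expand : (ℤ →₀ A) →+ B :=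
  Finsupp.liftAddHom fun n => (AddMonoidHom.mulRight (e n)).comp ofBase.toAddMonoidHom

lemma expand_single (n : ℤ) (r : A) : expand (Finsupp.single n r) = ofBase r * e n := by
  simp [expand]

/-- The elements of the form `∑ cₙ e n` contain the constants and are stable under sums and under
multiplication by each variable, so they exhaust `B`. -/
lemma exists_expand (w : B) : ∃ c, expand c = w := by
  have key : ∀ y : B, (∀ n, ∃ r m, e n * y = ofBase r * e m) →
      ∀ c, ∃ d, expand d = expand c * y := by
    intro y hy c
    induction c using Finsupp.induction_linear with
    | zero => exact ⟨0, by simp⟩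
    | add c₁ c₂ h₁ h₂ =>
      obtain ⟨d₁, h₁⟩ := h₁
      obtain ⟨d₂, h₂⟩ := h₂
      exact ⟨d₁ + d₂, by rw [map_add, map_add, h₁, h₂, add_mul]⟩
    | single n r =>
      obtain ⟨r', m, h⟩ := hy n
      exact ⟨Finsupp.single m (r * r'), by
        rw [expand_single, expand_single, mul_assoc, h, map_mul, mul_assoc]⟩
  obtain ⟨p, rfl⟩ := Ideal.Quotient.mk_surjective w
  induction p using MvPolynomial.induction_on with
  | C r =>
    refine ⟨Finsupp.single 0 (LaurentPolynomial.C r), ?_⟩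
    rw [expand_single, e_zero, mul_one, ofBase, LaurentPolynomial.eval₂_C]
    rfl
  | add p q hp hq =>
    obtain ⟨c, hc⟩ := hp
    obtain ⟨d, hd⟩ := hq
    exact ⟨c + d, by rw [map_add, map_add, hc, hd]⟩
  | mul_X p i hp =>
    obtain ⟨c, hc⟩ := hp
    rw [map_mul, ← hc]
    apply key
    intro n
    fin_cases i
    · exact ⟨α, n, by rw [ofBase_α, mul_comm]; rfl⟩
    · exact ⟨β, n, by rw [ofBase_β, mul_comm]; rfl⟩
    · obtain ⟨r, h⟩ := u_mul_e n
      exact ⟨r, _, h⟩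
    · obtain ⟨r, h⟩ := v_mul_e n
      exact ⟨r, _, h⟩

lemma toLaurent_e (n : ℤ) : toLaurent (e n) = .single n (s ^ (-n).toNat) := by
  rw [e, map_mul, map_pow, map_pow, toLaurent_x, toLaurent_x]
  simp only [coords, Matrix.cons_val]
  rw [mul_pow, LaurentPolynomial.T_pow, LaurentPolynomial.T_pow, ← map_pow, mul_left_comm,
    ← LaurentPolynomial.T_add, LaurentPolynomial.single_eq_C_mul_T]
  congr 2
  omega

lemma coeff_toLaurent_expand (c : ℤ →₀ A) (n : ℤ) :
    (toLaurent (expand c)).coeff n = c n * s ^ (-n).toNat := by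
  induction c using Finsupp.induction_linear with
  | zero => simp
  | add c₁ c₂ h₁ h₂ =>
    rw [map_add, map_add, AddMonoidAlgebra.coeff_add, Finsupp.add_apply, h₁, h₂, Finsupp.add_apply,
      add_mul]
  | single m r =>
    rw [expand_single, map_mul, toLaurent_ofBase, toLaurent_e,
      LaurentPolynomial.single_eq_C_mul_T, ← mul_assoc, ← map_mul,
      ← LaurentPolynomial.single_eq_C_mul_T, AddMonoidAlgebra.coeff_single]
    by_cases h : m = n
    · subst h; simp
    · rw [Finsupp.single_eq_of_ne' h, Finsupp.single_eq_of_ne' h, zero_mul]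

/-! ### Units have degree `0` -/

/-- The evaluation `B → ℂ` at the point `(-2, i√3, 0, 0)`. -/
noncomputable def point : B →+* ℂ :=
  Ideal.Quotient.lift J (eval ![-2, Complex.I * (Real.sqrt 3 : ℝ), 0, 0]) <| by
    suffices h : J ≤ RingHom.ker (eval ![-2, Complex.I * (Real.sqrt 3 : ℝ), 0, 0]) from
      fun p hp => h hp
    rw [Ideal.span_le]
    rintro p (rfl | rfl)
    · have h3 : ((Real.sqrt 3 : ℝ) : ℂ) ^ 2 = 3 := by
        rw [← Complex.ofReal_pow, Real.sq_sqrt (by norm_num)]; norm_num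
      simp [RingHom.mem_ker, mul_pow, h3]
      norm_num
    · simp [RingHom.mem_ker]

lemma point_e {n : ℤ} (hn : n ≠ 0) : point (e n) = 0 := by
  have h2 : point (x 2) = 0 := (Ideal.Quotient.lift_mk _ _ _).trans (by simp)
  have h3 : point (x 3) = 0 := (Ideal.Quotient.lift_mk _ _ _).trans (by simp)
  rw [e, map_mul, map_pow, map_pow, h2, h3, ← pow_add, zero_pow]
  omega

/-- In `A`, the element `a + 2 = (t + t⁻¹)/2 + 2` has coefficient `1/2 ≠ 0` at `t`. -/
lemma s_ne_zero : s ≠ 0 := by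
  apply pow_ne_zero
  intro h
  have h2 : (2 : A) = .single 0 2 := (map_ofNat LaurentPolynomial.C 2).symm
  rw [α, mul_add, ← LaurentPolynomial.single_eq_C_mul_T, ← LaurentPolynomial.single_eq_C_mul_T,
    h2] at h
  have h1 := congrArg (fun f : A => f.coeff 1) h
  simp only [AddMonoidAlgebra.coeff_add, AddMonoidAlgebra.coeff_single, Finsupp.add_apply,
    Finsupp.single_apply, AddMonoidAlgebra.coeff_zero, Finsupp.zero_apply] at h1
  norm_num at h1

/-- Units of `B` come from `A`, i.e. have degree `0`. -/
lemma exists_ofBase (w : Bˣ) : ∃ r, (w : B) = ofBase r := by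
  obtain ⟨c, hc⟩ := exists_expand w
  obtain ⟨N, r, hr⟩ := exists_eq_single_of_isUnit (w.isUnit.map toLaurent)
  have hcN : c = Finsupp.single N (c N) := by
    ext1 n
    by_cases h : N = n
    · subst h; simp
    · rw [Finsupp.single_eq_of_ne' h]
      have := coeff_toLaurent_expand c n
      rw [hc, hr, AddMonoidAlgebra.coeff_single, Finsupp.single_eq_of_ne' h] at this
      exact (mul_eq_zero.1 this.symm).resolve_right (pow_ne_zero _ s_ne_zero)
  rw [hcN, expand_single] at hc
  rcases eq_or_ne N 0 with rfl | hN
  · exact ⟨_, by rw [← hc, e_zero, mul_one]⟩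
  · exfalso
    have := (w.isUnit.map point).ne_zero
    rw [← hc, map_mul, point_e hN, mul_zero] at this
    exact this rfl

/-! ### The subalgebra generated by the units -/

lemma x_mem {i : Fin 4} (hi : i = 0 ∨ i = 1) : x i ∈ Algebra.adjoin ℂ ({x 0, x 1} : Set B) :=
  Algebra.subset_adjoin (by rcases hi with rfl | rfl <;> simp)

lemma ofBase_mem (r : A) : ofBase r ∈ Algebra.adjoin ℂ ({x 0, x 1} : Set B) := by
  have h0 := x_mem (i := 0) (by simp)
  have h1 := x_mem (i := 1) (by simp)
  have hi := Subalgebra.algebraMap_mem (Algebra.adjoin ℂ ({x 0, x 1} : Set B)) Complex.I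
  induction r using LaurentPolynomial.induction_on' with
  | add p q hp hq => rw [map_add]; exact add_mem hp hq
  | C_mul_T n z =>
    rw [ofBase, LaurentPolynomial.eval₂_C_mul_T]
    refine mul_mem (Subalgebra.algebraMap_mem _ _) ?_
    obtain ⟨k, rfl | rfl⟩ := n.eq_nat_or_neg
    · rw [zpow_natCast, Units.val_pow_eq_pow_val]
      exact pow_mem (add_mem h0 (mul_mem hi h1)) k
    · rw [zpow_neg, zpow_natCast, ← inv_pow, Units.val_pow_eq_pow_val]
      exact pow_mem (sub_mem h0 (mul_mem hi h1)) k

lemma unit_mem (w : Bˣ) : (w : B) ∈ Algebra.adjoin ℂ ({x 0, x 1} : Set B) := by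
  obtain ⟨r, hr⟩ := exists_ofBase w
  exact hr ▸ ofBase_mem r

lemma adjoin_units :
    Algebra.adjoin ℂ {y : B | IsUnit y} = Algebra.adjoin ℂ ({x 0, x 1} : Set B) := by
  apply le_antisymm
  · apply Algebra.adjoin_le
    rintro y ⟨w, rfl⟩
    exact unit_mem w
  · have h (w : Bˣ) : (w : B) ∈ Algebra.adjoin ℂ {y : B | IsUnit y} :=
      Algebra.subset_adjoin w.isUnit
    have hc (z : ℂ) := Subalgebra.algebraMap_mem (Algebra.adjoin ℂ {y : B | IsUnit y}) z
    -- The image of `A` is spanned by the units `(a + ib)ⁿ`.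
    have hA (r : A) : ofBase r ∈ Algebra.adjoin ℂ {y : B | IsUnit y} := by
      induction r using LaurentPolynomial.induction_on' with
      | add p q hp hq => rw [map_add]; exact add_mem hp hq
      | C_mul_T n z =>
        rw [ofBase, LaurentPolynomial.eval₂_C_mul_T]
        exact mul_mem (hc z) (h _)
    apply Algebra.adjoin_le
    rintro y (rfl | rfl)
    · exact ofBase_α ▸ hA α
    · exact ofBase_β ▸ hA β

end TorusUnits

/-- In `B_T = ℂ[a,b,u,v]/(a² + b² − 1, uv − (a+2)²)`, every unit lies in the
`ℂ`-subalgebra generated by the residues of `a` and `b`; consequently the `ℂ`-subalgebra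
generated by all units equals the image of `ℂ[a,b]`.
(Variables: `X 0 = a`, `X 1 = b`, `X 2 = u`, `X 3 = v`.) -/
theorem stmt_19 :
    (∀ w : (MvPolynomial (Fin 4) ℂ ⧸
        Ideal.span {(X 0 : MvPolynomial (Fin 4) ℂ) ^ 2 + X 1 ^ 2 - 1,
          (X 2 : MvPolynomial (Fin 4) ℂ) * X 3 - (X 0 + 2) ^ 2})ˣ,
      (w : MvPolynomial (Fin 4) ℂ ⧸
          Ideal.span {(X 0 : MvPolynomial (Fin 4) ℂ) ^ 2 + X 1 ^ 2 - 1,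
            (X 2 : MvPolynomial (Fin 4) ℂ) * X 3 - (X 0 + 2) ^ 2}) ∈
        Algebra.adjoin ℂ
          {Ideal.Quotient.mk (Ideal.span {(X 0 : MvPolynomial (Fin 4) ℂ) ^ 2 + X 1 ^ 2 - 1,
              (X 2 : MvPolynomial (Fin 4) ℂ) * X 3 - (X 0 + 2) ^ 2}) (X 0),
            Ideal.Quotient.mk (Ideal.span {(X 0 : MvPolynomial (Fin 4) ℂ) ^ 2 + X 1 ^ 2 - 1,
              (X 2 : MvPolynomial (Fin 4) ℂ) * X 3 - (X 0 + 2) ^ 2}) (X 1)}) ∧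
    Algebra.adjoin ℂ
        {x : MvPolynomial (Fin 4) ℂ ⧸
            Ideal.span {(X 0 : MvPolynomial (Fin 4) ℂ) ^ 2 + X 1 ^ 2 - 1,
              (X 2 : MvPolynomial (Fin 4) ℂ) * X 3 - (X 0 + 2) ^ 2} | IsUnit x} =
      Algebra.adjoin ℂ
        {Ideal.Quotient.mk (Ideal.span {(X 0 : MvPolynomial (Fin 4) ℂ) ^ 2 + X 1 ^ 2 - 1,
            (X 2 : MvPolynomial (Fin 4) ℂ) * X 3 - (X 0 + 2) ^ 2}) (X 0),
          Ideal.Quotient.mk (Ideal.span {(X 0 : MvPolynomial (Fin 4) ℂ) ^ 2 + X 1 ^ 2 - 1,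
            (X 2 : MvPolynomial (Fin 4) ℂ) * X 3 - (X 0 + 2) ^ 2}) (X 1)} := by
  exact ⟨TorusUnits.unit_mem, TorusUnits.adjoin_units⟩
end
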